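/- arXiv:0707.1108 — 4 statements merged into one kernel-verified Lean document; each statement's English description precedes it below -/
import Mathlib

section
/- Let p be a prime, let m > n > 0 be integers, and let a be a nonzero element of the prime field F_p. If the polynomial f(x) = x^m + a x^n permutes F_p, then gcd(m−n, p−1) ≥ √(p − 3/4) − 1/2, and in particular gcd(m−n, p−1) > √p − 1. -/
/-!
Let `s = gcd (m - n) (p - 1)` and `p - 1 = s * e`. If `f = x ^ m + a * x ^ n` permutes `F_p`, then
`∑ x, f x ^ k = 0` for `0 < k < p - 1`. Expanding by the binomial theorem, this sum is
`- ∑ C(k, j) a ^ (k - j)` over the `j ∈ [0, k]` with `p - 1 ∣ m * j + n * (k - j)`, and each term is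
nonzero because `k < p`; so there cannot be exactly one such `j` (`not_unique_exponent`).

For `k = s * t` the condition on `j` becomes `j ≡ ν * t [ZMOD e]`, with `ν` independent of `t`.
If the bound fails then `s + 2 ≤ e`, and a counting argument (`exists_unique_residue`) produces a
`t` for which exactly one `j ∈ [0, s * t]` satisfies the congruence: put `q = (e - 2) / s`, so that
`s * q < e - 1 ≤ s * (q + 1)`; one of `t = 1`, `t = q`, `t = q + 1` works.
Hence `p ≤ s ^ 2 + s + 1`, which is the claim.
-/

/-- An interval `[0, k]` with `k < c % e + e` is too short to contain any integer congruent to `c`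
modulo `e` other than `c % e`. -/
lemma dvd_sub_iff_eq_emod {e c k j : ℤ} (he : 0 < e) (hk : k < c % e + e)
    (hj0 : 0 ≤ j) (hjk : j ≤ k) : e ∣ j - c ↔ j = c % e := by
  have h1 := Int.emod_nonneg c he.ne'
  have h2 := Int.emod_lt_of_pos c he
  constructor
  · intro h
    have h3 : e ∣ j - c % e := by
      have : j - c % e = (j - c) + e * (c / e) := by
        linarith [Int.emod_add_mul_ediv c e]
      rw [this]
      exact dvd_add h (dvd_mul_right _ _)
    obtain ⟨w, hw⟩ := h3
    have hw1 : w < 1 := by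
      by_contra! hc
      nlinarith
    have hw2 : -1 < w := by
      by_contra! hc
      nlinarith
    have : w = 0 := by omega
    rw [this] at hw
    linarith
  · rintro rfl
    exact ⟨-(c / e), by linarith [Int.emod_add_mul_ediv c e]⟩

/-- If `s + 2 ≤ e` then some interval `[0, s * t]` with `0 < s * t < s * e` contains exactly one
representative of the class of `ν * t` modulo `e`. -/
lemma exists_unique_residue (s e ν : ℤ) (hs : 0 < s) (hse : s + 2 ≤ e) :
    ∃ t j₀ : ℤ, 0 < t ∧ t < e ∧ 0 ≤ j₀ ∧ j₀ ≤ s * t ∧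
      ∀ j, 0 ≤ j → j ≤ s * t → (e ∣ j - ν * t ↔ j = j₀) := by
  have he : 0 < e := by omega
  obtain ⟨q, hq⟩ : ∃ q, q = (e - 2) / s := ⟨_, rfl⟩
  have hq1 : s * q ≤ e - 2 := by rw [hq]; exact Int.mul_ediv_self_le hs.ne'
  have hq2 : e - 2 < s * (q + 1) := by
    rw [hq]; linarith [Int.lt_mul_ediv_self_add (x := e - 2) hs]
  have hqpos : 0 < q := by
    by_contra! hc
    nlinarith
  have hqe : q + 1 < e := by nlinarith
  have reduce : ∀ t, 0 < t → t < e → (ν * t) % e ≤ s * t → s * t < (ν * t) % e + e →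
      ∃ t j₀ : ℤ, 0 < t ∧ t < e ∧ 0 ≤ j₀ ∧ j₀ ≤ s * t ∧
      ∀ j, 0 ≤ j → j ≤ s * t → (e ∣ j - ν * t ↔ j = j₀) :=
    fun t h1 h2 h3 h4 => ⟨t, (ν * t) % e, h1, h2, Int.emod_nonneg _ he.ne', h3,
      fun j hj0 hj => dvd_sub_iff_eq_emod he h4 hj0 hj⟩
  have nn : ∀ c : ℤ, 0 ≤ c % e := fun c => Int.emod_nonneg c he.ne'
  have lt : ∀ c : ℤ, c % e < e := fun c => Int.emod_lt_of_pos c he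
  by_cases c1 : (ν * 1) % e ≤ s * 1
  · exact reduce 1 (by norm_num) (by omega) c1 (by linarith [nn (ν * 1)])
  by_cases c2 : (ν * q) % e ≤ s * q
  · exact reduce q hqpos (by omega) c2 (by linarith [nn (ν * q)])
  refine reduce (q + 1) (by omega) hqe (by linarith [lt (ν * (q + 1))]) ?_
  -- Otherwise the residues of `ν * q` and `ν * (q + 1)` would differ by at least `e - s + 1`
  -- downwards, forcing the residue of `ν` to be at most `s`.
  by_contra! c3
  push Not at c1 c2
  rw [mul_one, mul_one] at c1
  have hν : ν % e = (ν * (q + 1)) % e - (ν * q) % e + e := by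
    have h := dvd_sub_iff_eq_emod (e := e) (c := ν) (k := e - 1)
      (j := (ν * (q + 1)) % e - (ν * q) % e + e) he (by linarith [nn ν])
      (by linarith [nn (ν * (q + 1)), lt (ν * q)]) (by nlinarith)
    refine (h.1 ⟨1 - (ν * (q + 1)) / e + (ν * q) / e, ?_⟩).symm
    linarith [Int.emod_add_mul_ediv (ν * (q + 1)) e, Int.emod_add_mul_ediv (ν * q) e]
  nlinarith

/-- Power sums over `F_p` with positive exponent. -/
lemma sum_pow_zmod (p : ℕ) [Fact p.Prime] (i : ℕ) (hi : 0 < i) :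
    ∑ x : ZMod p, x ^ i = if p - 1 ∣ i then -1 else 0 := by
  have hp : p.Prime := Fact.out
  split_ifs with h
  · have : ∀ x : ZMod p, x ^ i = 1 - if x = 0 then 1 else 0 := by
      intro x
      obtain ⟨c, rfl⟩ := h
      split_ifs with hx
      · simp [hx, hi.ne']
      · rw [pow_mul, ZMod.pow_card_sub_one_eq_one hx]; simp
    simp [this]
  · have hr : 0 < i % (p - 1) := Nat.pos_of_ne_zero fun h0 => h (Nat.dvd_of_mod_eq_zero h0)
    have : ∀ x : ZMod p, x ^ i = x ^ (i % (p - 1)) := by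
      intro x
      by_cases hx : x = 0
      · simp [hx, hi.ne', hr.ne']
      · conv_lhs => rw [← Nat.mod_add_div i (p - 1), pow_add, pow_mul,
          ZMod.pow_card_sub_one_eq_one hx, one_pow, mul_one]
    simp_rw [this]
    apply FiniteField.sum_pow_lt_card_sub_one
    rw [ZMod.card]
    exact Nat.mod_lt _ (by have := hp.two_le; omega)

/-- The consequence of Hermite's criterion that is needed: for `0 < k < p - 1`, a permutation
binomial cannot have exactly one term of its `k`-th power with exponent divisible by `p - 1`. -/
lemma not_unique_exponent (p : ℕ) [Fact p.Prime] (m n : ℕ) (hn : 0 < n) (hnm : n < m)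
    (a : ZMod p) (ha : a ≠ 0)
    (hperm : Function.Bijective (fun x : ZMod p => x ^ m + a * x ^ n))
    (k j₀ : ℕ) (hk0 : 0 < k) (hk : k < p - 1) (hj₀ : j₀ ≤ k)
    (huniq : ∀ j ≤ k, (p - 1 ∣ m * j + n * (k - j) ↔ j = j₀)) : False := by
  have hp : p.Prime := Fact.out
  have h1 : ∑ x : ZMod p, (x ^ m + a * x ^ n) ^ k = 0 := by
    rw [hperm.sum_comp (fun y : ZMod p => y ^ k)]
    exact FiniteField.sum_pow_lt_card_sub_one _ _ (by rwa [ZMod.card])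
  have h2 : ∑ x : ZMod p, (x ^ m + a * x ^ n) ^ k =
      ∑ j ∈ Finset.range (k + 1), a ^ (k - j) * (k.choose j : ZMod p) *
        ∑ x : ZMod p, x ^ (m * j + n * (k - j)) := by
    simp_rw [add_pow, Finset.mul_sum]
    rw [Finset.sum_comm]
    refine Finset.sum_congr rfl fun j _ => Finset.sum_congr rfl fun x _ => ?_
    rw [mul_pow, pow_add, pow_mul, pow_mul]
    ring
  rw [h2, Finset.sum_eq_single j₀] at h1
  · have hpos : 0 < m * j₀ + n * (k - j₀) := by
      rcases Nat.eq_zero_or_pos j₀ with h | h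
      · subst h; simp [hn, hk0]
      · have := Nat.mul_pos (hn.trans hnm) h
        omega
    rw [sum_pow_zmod p _ hpos, if_pos ((huniq j₀ hj₀).2 rfl)] at h1
    have hc : (k.choose j₀ : ZMod p) ≠ 0 := by
      rw [Ne, ZMod.natCast_eq_zero_iff]
      intro hd
      have h3 : p ∣ k.factorial := by
        rw [← Nat.choose_mul_factorial_mul_factorial hj₀]
        exact (hd.mul_right _).mul_right _
      have := (hp.dvd_factorial).1 h3
      omega
    simp [ha, hc] at h1
  · intro j hj hjne
    have hjk : j ≤ k := by simpa [Nat.lt_succ_iff] using hj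
    have hpos : 0 < m * j + n * (k - j) := by
      rcases Nat.eq_zero_or_pos j with h | h
      · subst h; simp [hn, hk0]
      · have := Nat.mul_pos (hn.trans hnm) h
        omega
    rw [sum_pow_zmod p _ hpos, if_neg (fun h => hjne ((huniq j hjk).1 h)), mul_zero]
  · intro h
    exact absurd (Finset.mem_range.2 (Nat.lt_succ_of_le hj₀)) h

/-- Integer form of the lower bound: `p ≤ s ^ 2 + s + 1` with `s = gcd (m - n) (p - 1)`. -/
lemma card_le_gcd_sq (p : ℕ) [Fact p.Prime] (m n : ℕ) (hn : 0 < n) (hnm : n < m)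
    (a : ZMod p) (ha : a ≠ 0)
    (hperm : Function.Bijective (fun x : ZMod p => x ^ m + a * x ^ n))
    (s : ℕ) (hs : s = Nat.gcd (m - n) (p - 1)) : p ≤ s * s + s + 1 := by
  by_contra! hlt
  have hspos : 0 < s := by rw [hs]; exact Nat.gcd_pos_of_pos_left _ (by omega)
  obtain ⟨u, hu⟩ : s ∣ m - n := hs ▸ Nat.gcd_dvd_left _ _
  obtain ⟨e, he⟩ : s ∣ p - 1 := hs ▸ Nat.gcd_dvd_right _ _
  have hse : s + 2 ≤ e := by
    by_contra! hc
    have : s * e ≤ s * (s + 1) := Nat.mul_le_mul_left _ (by omega)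
    rw [mul_add] at this
    omega
  have hcop : Nat.Coprime u e := by
    have h := Nat.gcd_mul_left s u e
    rw [← hu, ← he, ← hs] at h
    exact Nat.eq_of_mul_eq_mul_left hspos (by rw [mul_one]; exact h.symm)
  obtain ⟨v, w, hvw⟩ := Nat.isCoprime_iff_coprime.2 hcop
  obtain ⟨t, j₀, ht0, hte, hj0, hjt, huniq⟩ :=
    exists_unique_residue s e (-(n * v)) (by exact_mod_cast hspos) (by exact_mod_cast hse)
  lift t to ℕ using ht0.le
  lift j₀ to ℕ using hj0
  norm_cast at ht0 hte hjt
  refine not_unique_exponent p m n hn hnm a ha hperm (s * t) j₀ (Nat.mul_pos hspos ht0)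
    (by rw [he]; exact Nat.mul_lt_mul_of_pos_left hte hspos) hjt fun j hj => ?_
  have hexp : m * j + n * (s * t - j) = s * (n * t + u * j) := by
    obtain ⟨d, hd⟩ := Nat.exists_eq_add_of_le hj
    have hm : m = n + s * u := by omega
    rw [hd, Nat.add_sub_cancel_left, hm]
    calc (n + s * u) * j + n * d = n * (j + d) + s * u * j := by ring
      _ = s * (n * t + u * j) := by rw [← hd]; ring
  rw [hexp, he, Nat.mul_dvd_mul_iff_left hspos]
  have h := huniq j (by positivity) (by exact_mod_cast hj)
  rw [Nat.cast_inj] at h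
  rw [← h, ← Int.natCast_dvd_natCast]
  push_cast
  constructor
  · intro hd
    have : (j : ℤ) - -(n * v) * t = v * (n * t + u * j) + e * (w * j) := by
      linear_combination (-(j : ℤ)) * hvw
    rw [this]
    exact dvd_add (hd.mul_left _) (dvd_mul_right _ _)
  · intro hd
    have : (n * t + u * j : ℤ) = u * (j - -(n * v) * t) + e * (w * n * t) := by
      linear_combination (-(n * t : ℤ)) * hvw
    rw [this]
    exact dvd_add (hd.mul_left _) (dvd_mul_right _ _)

/-- If `x^m + a x^n` permutes the prime field `F_p` (with `m > n > 0`, `a ≠ 0`), then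
`gcd(m-n, p-1) ≥ √(p - 3/4) - 1/2`, and in particular `gcd(m-n, p-1) > √p - 1`. -/
theorem permutation_binomial_gcd_lower_bound (p : ℕ) (hp : p.Prime) (m n : ℕ)
    (hn : 0 < n) (hnm : n < m) (a : ZMod p) (ha : a ≠ 0)
    (hperm : Function.Bijective (fun x : ZMod p => x ^ m + a * x ^ n)) :
    Real.sqrt ((p : ℝ) - 3 / 4) - 1 / 2 ≤ (Nat.gcd (m - n) (p - 1) : ℝ) ∧
      Real.sqrt (p : ℝ) - 1 < (Nat.gcd (m - n) (p - 1) : ℝ) := by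
  have : Fact p.Prime := ⟨hp⟩
  have key := card_le_gcd_sq p m n hn hnm a ha hperm _ rfl
  have hspos : 0 < Nat.gcd (m - n) (p - 1) := Nat.gcd_pos_of_pos_left _ (by omega)
  generalize Nat.gcd (m - n) (p - 1) = s at key hspos ⊢
  have key' : (p : ℝ) ≤ s * s + s + 1 := by exact_mod_cast key
  have hs' : (0 : ℝ) < s := by exact_mod_cast hspos
  constructor
  · rw [sub_le_iff_le_add]
    apply Real.sqrt_le_iff.2
    constructor
    · positivity
    · nlinarith
  · rw [sub_lt_iff_lt_add, Real.sqrt_lt' (by positivity)]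
    nlinarith
end

section
/- Let q be a prime power with characteristic p, let m > n > 0 be integers, and let a be a nonzero element of F_q. If the polynomial f(x) = x^m + a x^n permutes F_q, then either q ≤ (m−2)^4 + 4m − 4, or m = n·p^i for some integer i ≥ 0. -/
/-!
Suppose `f = x^m + a x^n` is injective on `F_q`. Cancelling `gcd(m, n)` from the exponents keeps `f`
a permutation, so assume `m` and `n` coprime. If `x ≠ 0` and `t ≠ 1`, then `f(xt) ≠ f(x)`; with
`A = (T^n - 1)/(T - 1)` and `B = (T^m - 1)/(T - 1)` this says that `x^(m-n) B(t) ≠ -a A(t)`. Put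
`H = A B^(q-2)`, so that `H(t) = A(t)/B(t)` off the zeros of `B`. Then `-a H(t)` is never a nonzero
`(m-n)`-th power for `t ≠ 1`. Let `d = gcd(m - n, q - 1)` and let `χ` be a character of order `d`.
Then `∑_t ∑_{i<d} χ^i(-a H(t))` has absolute value at most `d`. Its `i = 0` part is at least
`q - (n + m - 2)`, and each other part is at most `(n + m - 3)√q` by a Weil bound (`weil_bound`).
The resulting quadratic inequality in `√q` gives the claim (`ineq_final`).

The Weil bound `|∑_t χ(H(t))| ≤ (D - 1)√q`, where `D` is the number of distinct roots of `H`, needs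
a root of `H` whose multiplicity is prime to `q - 1`. Such a root exists unless `m = n p^i`
(`exists_theta`): take a primitive root of unity of order the prime-to-`p` part of `m`, or of order
`n` when `m` is a power of `p`. The bound is proved as follows.

* The completely multiplicative function `f ↦ χ(Res(f, H))` on monic polynomials has an
  `L`-series `L(z) = ∑ z^(deg f) χ(Res(f, H))`. It is a polynomial of degree at most `D - 1`
  (`monicSum_eq_zero`) and its linear coefficient is `∑_t χ(H(t))`.
* The `j`-th coefficient of `L'/L` is `∑_u χ(u) N_j(u)`, where `N_j(u)` is the number of
  `β ∈ F_{q^j}` such that `H(β)` has norm `u` (`monicSum_rec`, `lamb_eq`).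
* For even `j`, Stepanov's method bounds `N_j(u)` above by `q^j/(q-1) + O(q^(j/2))` (`stepanov`,
  `ptCount_le`). Since `∑_u N_j(u) = q^j + O(1)`, an upper bound for every `u` is also a lower bound,
  and the even coefficients of `L'/L` are `O(q^(j/2))` (`lamb_bound`).
* These coefficients are those of the logarithmic derivative of `L(z) L(-z)`, whose zeros
  therefore have absolute value at least `q^(-1/2)` (`coeff_one_bound`).
-/

open Polynomial

/-! ### Stepanov's method -/

/-- The integers `k + s i + e v j`, with `0 ≤ k < A` and `0 ≤ j < d`, are pairwise distinct: modulo
`s = d e + 1` they become `k - ⌊v j / d⌋ + e (v j mod d)`, and `v` is a unit modulo `d`. These are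
the orders of vanishing at the origin of the summands of the Stepanov auxiliary polynomial. -/
lemma order_injective {s d e v A : ℕ} (hs : s = d * e + 1) (hA : A + v ≤ e)
    (hcop : v.Coprime d) {k i j k' i' j' : ℕ} (hk : k < A) (hk' : k' < A) (hj : j < d)
    (hj' : j' < d) (h : k + s * i + e * v * j = k' + s * i' + e * v * j') :
    k = k' ∧ i = i' ∧ j = j' := by
  have hd : 0 < d := by omega
  -- `α` and `ρ` are the quotient and the remainder of `v j` by `d`.
  have key : ∀ j : ℕ, j < d → ∃ α ρ : ℤ, (v : ℤ) * j = d * α + ρ ∧ 0 ≤ ρ ∧ ρ < d ∧ 0 ≤ α ∧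
      α ≤ v ∧ (ρ = 0 → α = 0) := by
    intro j hj
    refine ⟨((v * j / d : ℕ) : ℤ), ((v * j % d : ℕ) : ℤ), ?_, by positivity, ?_, by positivity, ?_, ?_⟩
    · exact_mod_cast (Nat.div_add_mod (v * j) d).symm
    · exact_mod_cast Nat.mod_lt _ hd
    · have : v * j / d ≤ v := by
        apply Nat.div_le_of_le_mul
        nlinarith
      exact_mod_cast this
    · intro h0
      have h1 : d ∣ v * j := Nat.dvd_of_mod_eq_zero (by exact_mod_cast h0)
      have h2 : d ∣ j := hcop.symm.dvd_of_dvd_mul_left h1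
      have h3 : j = 0 := Nat.eq_zero_of_dvd_of_lt h2 hj
      simp [h3]
  obtain ⟨α, ρ, h1, h2, h3, h4, h5, h6⟩ := key j hj
  obtain ⟨α', ρ', h1', h2', h3', h4', h5', h6'⟩ := key j' hj'
  have hb : ∀ (k : ℕ) (α ρ : ℤ), k < A → 0 ≤ ρ → ρ < d → 0 ≤ α → α ≤ v → (ρ = 0 → α = 0) →
      0 ≤ (k : ℤ) - α + e * ρ ∧ (k : ℤ) - α + e * ρ < s := by
    intro k α ρ hk h2 h3 h4 h5 h6
    have hA' : (A : ℤ) + v ≤ e := by exact_mod_cast hA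
    have hk' : (k : ℤ) < A := by exact_mod_cast hk
    have hs' : (s : ℤ) = d * e + 1 := by exact_mod_cast hs
    rcases h2.eq_or_lt with h0 | h0
    · rw [h6 h0.symm, ← h0]
      constructor
      · simp
      · have : (1 : ℤ) ≤ d := by exact_mod_cast hd
        nlinarith
    · constructor
      · nlinarith
      · nlinarith
  have b := hb k α ρ hk h2 h3 h4 h5 h6
  have b' := hb k' α' ρ' hk' h2' h3' h4' h5' h6'
  have hs' : (s : ℤ) = d * e + 1 := by exact_mod_cast hs
  have hz : (k : ℤ) + s * i + e * v * j = k' + s * i' + e * v * j' := by exact_mod_cast h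
  have hE : ((k : ℤ) - α + e * ρ) + s * (i + α) = ((k' : ℤ) - α' + e * ρ') + s * (i' + α') := by
    have a1 : (e : ℤ) * v * j = (s - 1) * α + e * ρ := by
      rw [mul_assoc, h1, hs']; ring
    have a2 : (e : ℤ) * v * j' = (s - 1) * α' + e * ρ' := by
      rw [mul_assoc, h1', hs']; ring
    rw [a1, a2] at hz
    linarith
  have hx : (k : ℤ) - α + e * ρ = (k' : ℤ) - α' + e * ρ' := by
    rw [← Int.emod_eq_of_lt b.1 b.2, ← Int.emod_eq_of_lt b'.1 b'.2]
    have := congrArg (· % (s : ℤ)) hE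
    simpa [Int.add_mul_emod_self_left] using this
  have hA' : (A : ℤ) + v ≤ e := by exact_mod_cast hA
  have hkz : (k : ℤ) < A := by exact_mod_cast hk
  have hkz' : (k' : ℤ) < A := by exact_mod_cast hk'
  have hk0 : (0 : ℤ) ≤ k := by positivity
  have hk0' : (0 : ℤ) ≤ k' := by positivity
  have hρ : ρ = ρ' := by
    have he0 : (0 : ℤ) ≤ e := by positivity
    rcases lt_trichotomy ρ ρ' with hl | hl | hl
    · have : (e : ℤ) * 1 ≤ e * (ρ' - ρ) := mul_le_mul_of_nonneg_left (by linarith) he0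
      rw [mul_sub] at this
      linarith
    · exact hl
    · have : (e : ℤ) * 1 ≤ e * (ρ - ρ') := mul_le_mul_of_nonneg_left (by linarith) he0
      rw [mul_sub] at this
      linarith
  have hjj : j = j' := by
    have h7 : (d : ℤ) ∣ v * (j - j') := ⟨α - α', by rw [mul_sub, h1, h1', hρ]; ring⟩
    have h8 : (d : ℤ) ∣ (j : ℤ) - j' :=
      (Nat.isCoprime_iff_coprime.mpr hcop.symm).dvd_of_dvd_mul_left h7
    have h9 := Int.eq_zero_of_abs_lt_dvd h8 (by rw [abs_lt]; constructor <;> omega)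
    omega
  subst hjj
  have hα : α = α' := by
    have : (d : ℤ) * α = d * α' := by rw [hρ] at h1; linarith
    exact mul_left_cancel₀ (by exact_mod_cast hd.ne') this
  have hkk : k = k' := by
    rw [hρ, hα] at hx
    have : (k : ℤ) = k' := by linarith
    exact_mod_cast this
  subst hkk
  refine ⟨rfl, ?_, rfl⟩
  have : s * i = s * i' := by omega
  exact Nat.eq_of_mul_eq_mul_left (by omega) this

/-- The core of Stepanov's method, for points with `β^(s²) = β + c` and `h(β)^(e(s+1)) = z`. The
auxiliary polynomial is `Φ = ∑ g_{k,i,j} X^(k + s i) h^(e j)`. On the points,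
`Φ^s h^(e(d-1))` agrees with a combination, with coefficients `g^s`, of polynomials of
small degree. By a dimension count (`hK`) the `g`, not all zero, can be chosen to make this
combination vanish identically, so that every point is a root of `Φ`. The summands of `Φ` vanish
at `0` to distinct orders because the order `v` of `h` there is coprime to `d`, so `Φ ≠ 0`. -/
lemma stepanov_aux {L : Type*} [Field L] [IsAlgClosed L] (p r : ℕ) [Fact p.Prime] [CharP L p]
    {s d e w v A K : ℕ} (hs : s = p ^ r) (hsd : s = d * e + 1) (h u : L[X])
    (hh : h = X ^ v * u) (hu : u.coeff 0 ≠ 0) (hcop : v.Coprime d) (hw : h.natDegree ≤ w)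
    (c z : L) (hz : z ≠ 0) (S : Finset L)
    (hS : ∀ β ∈ S, β ^ (s * s) = β + c ∧ (h.eval β) ^ (e * (s + 1)) = z)
    (hA : A + w ≤ e) (hK : s * A + K + s * w < d * K * A) :
    S.card ≤ A + s * (K + w) := by
  classical
  have hu0 : u ≠ 0 := by rintro rfl; simp at hu
  have hvw : v ≤ w := by
    refine le_trans ?_ hw
    rw [hh, natDegree_mul (pow_ne_zero _ X_ne_zero) hu0, natDegree_X_pow]
    omega
  have hApos : 0 < A := by
    rcases Nat.eq_zero_or_pos A with h0 | h0
    · subst h0; simp at hK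
    · exact h0
  have hdpos : 0 < d := by
    rcases Nat.eq_zero_or_pos d with h0 | h0
    · subst h0; simp at hK
    · exact h0
  let ψ : Fin A × Fin K × Fin d → L[X] := fun x =>
    X ^ (s * (x.1 : ℕ)) * (X + C c) ^ (x.2.1 : ℕ) * C (z ^ (x.2.2 : ℕ)) *
      h ^ (e * (d - 1 - (x.2.2 : ℕ)))
  have hdeg_h : ∀ j : ℕ, j ≤ d - 1 → (h ^ (e * j)).natDegree ≤ s * w := by
    intro j hj
    refine natDegree_pow_le.trans (Nat.mul_le_mul ?_ hw)
    calc e * j ≤ e * d := Nat.mul_le_mul_left _ (by omega)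
      _ ≤ s := by rw [hsd, mul_comm]; omega
  have hψ : ∀ x, ψ x ∈ degreeLT L (s * A + K + s * w) := by
    rintro ⟨k, i, j⟩
    rw [mem_degreeLT]
    refine lt_of_le_of_lt degree_le_natDegree ?_
    rw [Nat.cast_lt]
    have h1 := hdeg_h (d - 1 - (j : ℕ)) (by omega)
    have h2 : (ψ (k, i, j)).natDegree ≤ s * (k : ℕ) + (i : ℕ) + 0 + s * w := by
      refine natDegree_mul_le_of_le (natDegree_mul_le_of_le (natDegree_mul_le_of_le
        (natDegree_X_pow_le _) ?_) (natDegree_C _).le) h1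
      refine natDegree_pow_le.trans ?_
      rw [natDegree_X_add_C, mul_one]
    have h3 : s * (k : ℕ) ≤ s * A := Nat.mul_le_mul_left _ k.2.le
    have := i.2
    omega
  obtain ⟨b, hb, x1, hx1⟩ : ∃ b : Fin A × Fin K × Fin d → L, ∑ x, b x • ψ x = 0 ∧ ∃ x, b x ≠ 0 := by
    have hnli : ¬ LinearIndependent L (fun x => (⟨ψ x, hψ x⟩ : degreeLT L (s * A + K + s * w))) := by
      intro hli
      have h1 := hli.fintype_card_le_finrank
      rw [(degreeLTEquiv L _).finrank_eq] at h1
      simp only [Fintype.card_prod, Fintype.card_fin, Module.finrank_fin_fun] at h1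
      have : A * (K * d) = d * K * A := by ring
      omega
    rw [Fintype.not_linearIndependent_iff] at hnli
    obtain ⟨b, hb, hx⟩ := hnli
    refine ⟨b, ?_, hx⟩
    have := congrArg Subtype.val hb
    simpa using this
  have hspos : 0 < s := by omega
  choose g hg using fun x => IsAlgClosed.exists_pow_nat_eq (b x) hspos
  have hg0 : ∀ x, g x = 0 ↔ b x = 0 := by
    intro x
    rw [← hg x, pow_eq_zero_iff hspos.ne']
  let φ : Fin A × Fin K × Fin d → L[X] := fun x =>
    X ^ ((x.1 : ℕ) + s * (x.2.1 : ℕ)) * h ^ (e * (x.2.2 : ℕ))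
  let Φ : L[X] := ∑ x, C (g x) * φ x
  -- `N x` is the order of vanishing of `φ x` at the origin; these orders are distinct.
  let N : Fin A × Fin K × Fin d → ℕ := fun x =>
    (x.1 : ℕ) + s * (x.2.1 : ℕ) + e * v * (x.2.2 : ℕ)
  have hN : Function.Injective N := by
    rintro ⟨k, i, j⟩ ⟨k', i', j'⟩ hxy
    obtain ⟨h1, h2, h3⟩ := order_injective hsd (by omega) hcop k.2 k'.2 j.2 j'.2 hxy
    ext <;> assumption
  have hφ : ∀ x, φ x = X ^ N x * u ^ (e * (x.2.2 : ℕ)) := by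
    intro x
    simp only [φ, N, hh]
    rw [mul_pow, ← pow_mul]
    ring
  have hΦ : Φ ≠ 0 := by
    obtain ⟨x0, hx0, hmin⟩ := Finset.exists_min_image (Finset.univ.filter fun x => b x ≠ 0) N
      ⟨x1, by simpa using hx1⟩
    intro h0
    have h1 := congrArg (fun P => P.coeff (N x0)) h0
    simp only [Φ, finsetSum_coeff, coeff_C_mul, coeff_zero] at h1
    rw [Finset.sum_eq_single x0] at h1
    · rw [hφ, coeff_X_pow_mul', if_pos le_rfl, Nat.sub_self, coeff_zero_eq_eval_zero, eval_pow,
        ← coeff_zero_eq_eval_zero] at h1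
      have h2 : g x0 ≠ 0 := by rw [Ne, hg0]; simpa using hx0
      exact mul_ne_zero h2 (pow_ne_zero _ hu) h1
    · intro x _ hx
      by_cases hbx : b x = 0
      · rw [(hg0 x).mpr hbx, zero_mul]
      · have h2 := hmin x (by simpa using hbx)
        have h3 : N x ≠ N x0 := fun h4 => hx (hN h4)
        rw [hφ, coeff_X_pow_mul', if_neg (by omega), mul_zero]
    · intro h2; exact absurd (Finset.mem_univ _) h2
  have hroot : ∀ β ∈ S, Φ.eval β = 0 := by
    intro β hβ
    obtain ⟨h1, h2⟩ := hS β hβ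
    have hhβ : h.eval β ≠ 0 := by
      intro h3
      rw [h3, zero_pow (Nat.mul_ne_zero (by omega) (by omega))] at h2
      exact hz h2.symm
    have h4 : (Φ.eval β) ^ s * (h.eval β) ^ (e * (d - 1)) = (∑ x, b x • ψ x).eval β := by
      have : ExpChar L p := ExpChar.prime Fact.out
      simp only [Φ, eval_finsetSum]
      rw [hs, sum_pow_char_pow, ← hs, Finset.sum_mul]
      refine Finset.sum_congr rfl fun x _ => ?_
      simp only [φ, ψ, eval_mul, eval_C, eval_pow, eval_X, eval_add, eval_smul, smul_eq_mul]
      rw [mul_pow, hg]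
      obtain ⟨k, i, j⟩ := x
      have hj := j.2
      have e1 : ((β ^ ((k : ℕ) + s * (i : ℕ))) ^ s) = β ^ (s * (k : ℕ)) * (β + c) ^ (i : ℕ) := by
        rw [← h1]; ring
      have e2 : ((h.eval β) ^ (e * (j : ℕ))) ^ s * (h.eval β) ^ (e * (d - 1)) =
          z ^ (j : ℕ) * (h.eval β) ^ (e * (d - 1 - (j : ℕ))) := by
        rw [← h2, ← pow_mul, ← pow_mul, ← pow_add, ← pow_add]
        congr 1
        obtain ⟨t, ht⟩ : ∃ t, d - 1 = j + t := ⟨d - 1 - j, by omega⟩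
        rw [ht, Nat.add_sub_cancel_left]
        ring
      rw [mul_pow, e1]
      linear_combination b (k, i, j) * β ^ (s * (k : ℕ)) * (β + c) ^ (i : ℕ) * e2
    rw [hb, eval_zero] at h4
    have := (mul_eq_zero.mp h4).resolve_right (pow_ne_zero _ hhβ)
    exact pow_eq_zero_iff hspos.ne' |>.mp this
  have hdeg : Φ.natDegree ≤ A + s * (K + w) := by
    refine natDegree_sum_le_of_forall_le _ _ fun x _ => ?_
    refine (natDegree_C_mul_le _ _).trans ?_
    have h1 := hdeg_h (x.2.2 : ℕ) (by omega)
    refine (natDegree_mul_le_of_le (natDegree_X_pow_le _) h1).trans ?_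
    have h2 : s * (x.2.1 : ℕ) ≤ s * K := Nat.mul_le_mul_left _ x.2.1.2.le
    have := x.1.2
    rw [mul_add]
    omega
  exact (card_le_degree_of_subset_roots (fun β hβ => by
    rw [mem_roots hΦ]; exact hroot β hβ)).trans hdeg

/-- Stepanov's bound `d |S| ≤ s² + C s`, with `C` depending only on `d` and on the degree bound `w`
for `h`. -/
lemma stepanov {L : Type*} [Field L] [IsAlgClosed L] (p : ℕ) [Fact p.Prime] [CharP L p]
    {d w v : ℕ} (hd : 0 < d) (h u : L[X]) (hh : h = X ^ v * u) (hu : u.coeff 0 ≠ 0)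
    (hcop : v.Coprime d) (hw : h.natDegree ≤ w) :
    ∃ C : ℕ, ∀ r e s : ℕ, s = p ^ r → s = d * e + 1 → 1 < s → ∀ (c z : L), z ≠ 0 → ∀ S : Finset L,
      (∀ β ∈ S, β ^ (s * s) = β + c ∧ (h.eval β) ^ (e * (s + 1)) = z) →
      d * S.card ≤ s * s + C * s := by
  set E0 := (d * (w + 3)) * w + (w + 3) + w + 1 with hE0
  refine ⟨d * (d * E0 + 1) + d * (2 * w + 4), ?_⟩
  intro r e s hs hsd hs1 c z hz S hS
  by_cases he : E0 < e
  -- With `A = e - w` and `K = e + w + 3`, `stepanov_aux` gives `|S| ≤ s e + O(s)`.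
  · obtain ⟨A, hA⟩ : ∃ A, e = A + w := ⟨e - w, by omega⟩
    have h1 := stepanov_aux p r (A := A) (K := e + (w + 3)) hs hsd h u hh hu hcop hw c z hz S hS
      (by omega) (by
        rw [hsd, hA]
        have : d * (w + 3) * w + (w + 3) + 1 < A := by omega
        nlinarith [mul_pos hd hd, Nat.zero_le (d * A), Nat.zero_le (d*w*A),
          Nat.mul_le_mul_right A hd, Nat.mul_le_mul_right w hd])
    have h2 : d * S.card ≤ d * (A + s * (e + (w + 3) + w)) := Nat.mul_le_mul_left _ h1
    have h3 : A ≤ s := by rw [hsd]; nlinarith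
    have h4 : d * A ≤ d * s := Nat.mul_le_mul_left _ h3
    have h5 : d * e ≤ s := by omega
    have h6 : s * (d * e) ≤ s * s := Nat.mul_le_mul_left _ h5
    nlinarith [Nat.zero_le (d * (d * E0 + 1) * s)]
  -- For the finitely many small `e`, the trivial bound `|S| ≤ s²` suffices.
  · have hs2 : 1 < s * s := by nlinarith
    have hdeg : (X ^ (s * s) - (X + C c) : L[X]).natDegree = s * s := by
      rw [natDegree_sub_eq_left_of_natDegree_lt] <;> simp [hs2]
    have h1 : S.card ≤ s * s := by
      rw [← hdeg]
      have hne : (X ^ (s * s) - (X + C c) : L[X]) ≠ 0 := by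
        intro h0
        rw [h0, natDegree_zero] at hdeg
        omega
      refine card_le_degree_of_subset_roots fun β hβ => ?_
      rw [mem_roots hne]
      simp [(hS β hβ).1]
    have h2 : s ≤ d * E0 + 1 := by
      have : d * e ≤ d * E0 := Nat.mul_le_mul_left _ (by omega)
      omega
    calc d * S.card ≤ d * (s * s) := Nat.mul_le_mul_left _ h1
      _ ≤ d * ((d * E0 + 1) * s) := Nat.mul_le_mul_left _ (Nat.mul_le_mul_right _ h2)
      _ ≤ _ := by
        rw [← mul_assoc, add_mul]
        omega

/-! ### Zeros of polynomials and their logarithmic derivatives -/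

/-- If `V = T G` as power series and `G` converges absolutely at a zero `z` of `T`, then `z` is a zero
of `V`. -/
lemma eval_of_coe_mul (V T : ℂ[X]) (G : PowerSeries ℂ) (z : ℂ)
    (hG : Summable fun n => ‖PowerSeries.coeff n G * z ^ n‖)
    (h : (V : PowerSeries ℂ) = (T : PowerSeries ℂ) * G) (hT : T.eval z = 0) : V.eval z = 0 := by
  have key : ∀ P : ℂ[X], HasSum (fun n => P.coeff n * z ^ n) (P.eval z) := by
    intro P
    rw [Polynomial.eval_eq_sum_range]
    apply hasSum_sum_of_ne_finset_zero
    intro b hb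
    rw [Finset.mem_range, not_lt] at hb
    rw [Polynomial.coeff_eq_zero_of_natDegree_lt hb, zero_mul]
  have hTs : Summable fun n => ‖T.coeff n * z ^ n‖ := by
    apply summable_of_ne_finset_zero (s := Finset.range (T.natDegree + 1))
    intro b hb
    rw [Finset.mem_range, not_lt] at hb
    rw [Polynomial.coeff_eq_zero_of_natDegree_lt hb, zero_mul, norm_zero]
  have := tsum_mul_tsum_eq_tsum_sum_antidiagonal_of_summable_norm hTs hG
  rw [(key T).tsum_eq, hT, zero_mul] at this
  rw [← (key V).tsum_eq, this]
  congr 1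
  funext n
  rw [← Polynomial.coeff_coe, h, PowerSeries.coeff_mul, Finset.sum_mul]
  refine Finset.sum_congr rfl fun x hx => ?_
  rw [Finset.HasAntidiagonal.mem_antidiagonal] at hx
  rw [← hx, pow_add, Polynomial.coeff_coe]
  ring

/-- Let `Λ` be the coefficients of `L'/L`. If the even-indexed `Λ k` are `O(ρ^k)`, then the zeros of
`L` satisfy `|z| ≥ 1/ρ`, so the linear coefficient, being minus the sum of the reciprocal zeros, is
at most `D ρ`. Even indices suffice: passing to `L(z) L(-z)` cancels the others. -/
lemma coeff_one_bound (L : ℂ[X]) (D : ℕ) (hL : L.natDegree ≤ D) (hL0 : L.coeff 0 = 1)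
    (Λ : ℕ → ℂ) (hΛ : ∀ k : ℕ, ((k : ℂ) + 1) * L.coeff (k + 1) =
      ∑ x ∈ Finset.HasAntidiagonal.antidiagonal k, L.coeff x.1 * Λ (x.2 + 1))
    (ρ K : ℝ) (hρ : 0 < ρ) (hK : ∀ k, Even k → 0 < k → ‖Λ k‖ ≤ K * ρ ^ k) :
    ‖L.coeff 1‖ ≤ D * ρ := by
  have hL0' : L.eval 0 = 1 := by rw [← Polynomial.coeff_zero_eq_eval_zero, hL0]
  have hLne : L ≠ 0 := by rintro rfl; simp at hL0
  set G : PowerSeries ℂ := PowerSeries.mk fun j => Λ (j + 1) with hG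
  have hd : (derivative L : PowerSeries ℂ) = (L : PowerSeries ℂ) * G := by
    ext k
    rw [Polynomial.coeff_coe, Polynomial.coeff_derivative, PowerSeries.coeff_mul, mul_comm, hΛ]
    simp [hG]
  set Ln : ℂ[X] := L.comp (-X) with hLn
  set Gn : PowerSeries ℂ := PowerSeries.rescale (-1) G with hGn
  have hresc : ∀ P : ℂ[X], ((P.comp (-X) : ℂ[X]) : PowerSeries ℂ)
      = PowerSeries.rescale (-1) (P : PowerSeries ℂ) := by
    intro P
    ext k
    have : (-X : ℂ[X]) = C (-1) * X := by simp
    rw [Polynomial.coeff_coe, PowerSeries.coeff_rescale, Polynomial.coeff_coe, this,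
      Polynomial.comp_C_mul_X_coeff, mul_comm]
  have hdn : (derivative Ln : PowerSeries ℂ) = - ((Ln : PowerSeries ℂ) * Gn) := by
    rw [hLn, hresc, hGn, ← map_mul, ← hd, ← hresc, Polynomial.derivative_comp]
    simp
  set M := L * Ln with hM
  have hM0 : M.eval 0 = 1 := by simp [hM, hLn, hL0']
  have hMd : (derivative M : PowerSeries ℂ) = (M : PowerSeries ℂ) * (G - Gn) := by
    rw [hM, Polynomial.derivative_mul, Polynomial.coe_add, Polynomial.coe_mul, Polynomial.coe_mul,
      Polynomial.coe_mul, hd, hdn]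
    ring
  have hMne : M ≠ 0 := by intro h; rw [h] at hM0; simp at hM0
  have hK0 : 0 ≤ K := by
    have := (norm_nonneg _).trans (hK 2 even_two two_pos)
    exact nonneg_of_mul_nonneg_left this (by positivity)
  have hGc : ∀ n, ‖PowerSeries.coeff n (G - Gn)‖ ≤ 2 * K * ρ ^ (n + 1) := by
    intro n
    rw [map_sub, hGn, PowerSeries.coeff_rescale, hG, PowerSeries.coeff_mk]
    rcases Nat.even_or_odd n with h | h
    · rw [h.neg_one_pow]; simp; positivity
    · rw [h.neg_one_pow, neg_one_mul, sub_neg_eq_add, ← two_mul, norm_mul, Complex.norm_two,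
        mul_assoc]
      gcongr
      exact hK _ (h.add_one) (Nat.succ_pos _)
  have hroot : ∀ z : ℂ, M.eval z = 0 → 1 ≤ ‖z‖ * ρ := by
    intro z hz
    by_contra! hlt
    have hsum : Summable fun n => ‖PowerSeries.coeff n (G - Gn) * z ^ n‖ := by
      refine Summable.of_nonneg_of_le (fun _ => norm_nonneg _) (fun n => ?_)
        ((summable_geometric_of_lt_one (by positivity) hlt).mul_left (2 * K * ρ))
      rw [norm_mul, norm_pow]
      calc _ ≤ 2 * K * ρ ^ (n + 1) * ‖z‖ ^ n := by gcongr; exact hGc n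
        _ = _ := by ring
    -- A zero `z` of order `μ + 1` would be a pole of `M'/M`, which converges at `z`.
    obtain ⟨U, hU, hUz⟩ := Polynomial.exists_eq_pow_rootMultiplicity_mul_and_not_dvd M hMne z
    have hμ : 0 < M.rootMultiplicity z := (Polynomial.rootMultiplicity_pos hMne).2 hz
    obtain ⟨μ, hμ'⟩ : ∃ μ, M.rootMultiplicity z = μ + 1 := ⟨_, (Nat.succ_pred_eq_of_pos hμ).symm⟩
    rw [hμ'] at hU
    rw [Polynomial.dvd_iff_isRoot] at hUz
    set Y := (X - C z : ℂ[X]) with hY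
    have e1 : derivative M = Y ^ μ * ((μ + 1 : ℂ[X]) * U + Y * derivative U) := by
      rw [hU, Polynomial.derivative_mul, Polynomial.derivative_pow]
      simp [hY]
      ring
    have e2 : (((μ + 1 : ℂ[X]) * U + Y * derivative U : ℂ[X]) : PowerSeries ℂ)
        = ((Y * U : ℂ[X]) : PowerSeries ℂ) * (G - Gn) := by
      have hYne : ((Y ^ μ : ℂ[X]) : PowerSeries ℂ) ≠ 0 := by
        rw [Ne, Polynomial.coe_eq_zero_iff]
        exact pow_ne_zero _ (Polynomial.X_sub_C_ne_zero z)
      apply mul_left_cancel₀ hYne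
      rw [← Polynomial.coe_mul, ← e1, hMd, ← mul_assoc, ← Polynomial.coe_mul]
      congr 2
      rw [hU]; ring
    have e3 := eval_of_coe_mul _ _ _ z hsum e2 (by simp [hY])
    simp [hY] at e3
    rcases e3 with h | h
    · exact (Nat.cast_add_one_ne_zero μ) h
    · exact hUz h
  have hr : ∀ z ∈ L.roots, ‖1 / (0 - z)‖ ≤ ρ := by
    intro z hz
    have hz0 : L.eval z = 0 := by simpa [hLne] using hz
    have := hroot z (by simp [hM, hz0])
    have hzp : 0 < ‖z‖ := by
      by_contra! h
      have : ‖z‖ * ρ ≤ 0 := mul_nonpos_of_nonpos_of_nonneg h hρ.le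
      linarith
    rw [zero_sub, norm_div, norm_neg, norm_one, div_le_iff₀ hzp]
    linarith
  have hl := (IsAlgClosed.splits L).eval_derivative_div_eval_of_ne_zero (x := 0) (by rw [hL0']; simp)
  rw [hL0', div_one] at hl
  have h1 : L.coeff 1 = (derivative L).eval 0 := by
    rw [← Polynomial.coeff_zero_eq_eval_zero, Polynomial.coeff_derivative]; simp
  rw [h1, hl]
  have h2 : ‖(L.roots.map fun z => 1 / (0 - z)).sum‖ ≤ (L.roots.map fun z => ‖1 / (0 - z)‖).sum := by
    have := norm_multiset_sum_le (L.roots.map fun z => 1 / (0 - z))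
    simpa [Multiset.map_map] using this
  refine h2.trans ?_
  have h3 := Multiset.sum_le_card_nsmul (L.roots.map fun z => ‖1 / (0 - z)‖) ρ (by
    intro x hx
    obtain ⟨z, hz, rfl⟩ := Multiset.mem_map.1 hx
    exact hr z hz)
  refine h3.trans ?_
  rw [Multiset.card_map, nsmul_eq_mul]
  gcongr
  exact (Polynomial.card_roots' L).trans hL

/-! ### The `L`-series of a multiplicative function on monic polynomials -/

lemma algebraMap_resultant {F E : Type*} [Field F] [Field E] [Algebra F E] [IsAlgClosed E] {f : F[X]} (hf : f.Monic) (H : F[X]) :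
    algebraMap F E (resultant f H) =
      ((f.map (algebraMap F E)).roots.map fun x => aeval x H).prod := by
  rw [← resultant_map_map, ← natDegree_map (algebraMap F E) (p := f),
    resultant_eq_prod_eval _ _ _ natDegree_map_le (IsAlgClosed.splits _), (hf.map _).leadingCoeff,
    one_pow, one_mul]
  simp only [eval_map_algebraMap]

open Classical in
/-- The exponent of `P` in `f` counts the positive powers of `P` dividing `f`. -/
lemma sum_pow_dvd {F : Type*} [Field F] {n : ℕ} {f P : F[X]} (hf : f.Monic) (hn : f.natDegree = n) (hP : P.Monic)
    (hPi : Irreducible P) :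
    ∑ i ∈ Finset.range n, (if P ^ (i + 1) ∣ f then (1 : ℕ) else 0) =
      (UniqueFactorizationMonoid.normalizedFactors f).count P := by
  set c := (UniqueFactorizationMonoid.normalizedFactors f).count P with hc
  have h : ∀ i, P ^ i ∣ f ↔ i ≤ c := by
    intro i
    rw [pow_dvd_iff_le_emultiplicity,
      UniqueFactorizationMonoid.emultiplicity_eq_count_normalizedFactors hPi hf.ne_zero,
      hP.normalize_eq_self]
    exact_mod_cast Iff.rfl
  have hcn : c ≤ n := by
    have h1 := natDegree_le_of_dvd ((h c).2 le_rfl) hf.ne_zero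
    rw [natDegree_pow, hn] at h1
    exact (Nat.le_mul_of_pos_right c hPi.natDegree_pos).trans h1
  simp only [h, Nat.succ_le_iff]
  rw [Finset.sum_boole]
  have : {i ∈ Finset.range n | i < c} = Finset.range c := by
    ext i; simp; omega
  simp [this]

section LSeries
variable {F : Type*} [Field F] [Fintype F]

lemma finite_natDegree_le (n : ℕ) : {f : F[X] | f.natDegree ≤ n}.Finite := by
  have h : Finite (degreeLT F (n + 1)) := Finite.of_equiv _ (degreeLTEquiv F (n + 1)).symm.toEquiv
  refine Set.Finite.subset (s := (degreeLT F (n + 1) : Set F[X])) h fun f hf => ?_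
  simp only [Set.mem_ofPred_eq] at hf
  simp only [SetLike.mem_coe, mem_degreeLT]
  exact lt_of_le_of_lt degree_le_natDegree (by exact_mod_cast Nat.lt_succ_of_le hf)

/-- The finite set of monic polynomials of degree `n`. -/
noncomputable def monics (F : Type*) [Field F] [Fintype F] (n : ℕ) : Finset F[X] :=
  ((finite_natDegree_le (F := F) n).subset (t := {f | f.Monic ∧ f.natDegree = n})
    fun _ h => h.2.le).toFinset

/-- The finite set of monic irreducible polynomials of degree at most `n`. -/
noncomputable def irrs (F : Type*) [Field F] [Fintype F] (n : ℕ) : Finset F[X] :=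
  ((finite_natDegree_le (F := F) n).subset
    (t := {f | f.Monic ∧ Irreducible f ∧ f.natDegree ≤ n}) fun _ h => h.2.2).toFinset

lemma mem_monics {n : ℕ} {f : F[X]} : f ∈ monics F n ↔ f.Monic ∧ f.natDegree = n := by
  simp [monics]

lemma mem_irrs {n : ℕ} {f : F[X]} :
    f ∈ irrs F n ↔ f.Monic ∧ Irreducible f ∧ f.natDegree ≤ n := by
  simp [irrs]

/-- The `n`-th coefficient of the `L`-series of `χ`: the sum of `χ f` over the monic `f` of degree
`n`. -/
noncomputable def monicSum (χ : F[X] → ℂ) (n : ℕ) : ℂ := ∑ f ∈ monics F n, χ f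

open Classical in
/-- The coefficient of `z^(j-1)` in the logarithmic derivative of the `L`-series of `χ`, namely
`∑ deg P * χ(P)^(j / deg P)` over the monic irreducible `P` whose degree divides `j`. The bound
`deg P ≤ j` built into `irrs F j` is automatic for `j > 0`. -/
noncomputable def lamb (χ : F[X] → ℂ) (j : ℕ) : ℂ :=
  ∑ P ∈ irrs F j with P.natDegree ∣ j, (P.natDegree : ℂ) * χ P ^ (j / P.natDegree)

open Classical in
lemma sum_monics_dvd (χ : F[X] → ℂ) (hmul : ∀ f g, f.Monic → g.Monic → χ (f * g) = χ f * χ g)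
    (n : ℕ) (Q : F[X]) (hQ : Q.Monic) :
    ∑ f ∈ monics F n, (if Q ∣ f then χ f else 0) =
      if Q.natDegree ≤ n then χ Q * monicSum χ (n - Q.natDegree) else 0 := by
  rw [← Finset.sum_filter]
  split_ifs with h
  · rw [monicSum, Finset.mul_sum]
    symm
    refine Finset.sum_nbij (fun g => Q * g) ?_ ?_ ?_ ?_
    · intro g hg
      rw [mem_monics] at hg
      rw [Finset.mem_filter, mem_monics]
      refine ⟨⟨hQ.mul hg.1, ?_⟩, dvd_mul_right _ _⟩
      rw [hQ.natDegree_mul hg.1, hg.2]; omega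
    · intro a _ b _ hab
      exact mul_left_cancel₀ hQ.ne_zero hab
    · intro f hf
      simp only [Finset.coe_filter, Set.mem_ofPred_eq, mem_monics] at hf
      obtain ⟨⟨h1, h2⟩, g, rfl⟩ := hf
      refine ⟨g, ?_, rfl⟩
      have hg : g.Monic := hQ.of_mul_monic_left h1
      rw [Finset.mem_coe, mem_monics]
      refine ⟨hg, ?_⟩
      rw [hQ.natDegree_mul hg] at h2; omega
    · intro g hg
      rw [mem_monics] at hg
      exact (hmul _ _ hQ hg.1).symm
  · apply Finset.sum_eq_zero
    intro f hf
    rw [Finset.mem_filter, mem_monics] at hf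
    exfalso
    have := natDegree_le_of_dvd hf.2 hf.1.1.ne_zero
    omega

open Classical in
/-- The polynomial analogue of `log = Λ * 1`: the degree of `f` is the sum of `deg P` over the prime
powers `P ^ (i + 1)` dividing `f`. -/
lemma natDegree_eq_sum {n : ℕ} {f : F[X]} (hf : f.Monic) (hn : f.natDegree = n) :
    n = ∑ P ∈ irrs F n, ∑ i ∈ Finset.range n, (if P ^ (i + 1) ∣ f then P.natDegree else 0) := by
  have h1 : ∀ P ∈ irrs F n, ∑ i ∈ Finset.range n, (if P ^ (i + 1) ∣ f then P.natDegree else 0)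
      = (UniqueFactorizationMonoid.normalizedFactors f).count P • P.natDegree := by
    intro P hP
    rw [mem_irrs] at hP
    rw [← sum_pow_dvd hf hn hP.1 hP.2.1, smul_eq_mul, Finset.sum_mul]
    simp
  rw [Finset.sum_congr rfl h1]
  have hm : ∀ P ∈ UniqueFactorizationMonoid.normalizedFactors f, P.Monic ∧ Irreducible P ∧ P ∣ f := by
    intro P hP
    have hi := UniqueFactorizationMonoid.irreducible_of_normalized_factor P hP
    refine ⟨?_, hi, UniqueFactorizationMonoid.dvd_of_mem_normalizedFactors hP⟩
    rw [← UniqueFactorizationMonoid.normalize_normalized_factor P hP]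
    exact monic_normalize hi.ne_zero
  have h2 : f = (UniqueFactorizationMonoid.normalizedFactors f).prod := by
    rw [UniqueFactorizationMonoid.prod_normalizedFactors_eq hf.ne_zero, hf.normalize_eq_self]
  conv_lhs => rw [← hn, h2, natDegree_multiset_prod_of_monic _ (fun P hP => (hm P hP).1),
    Finset.sum_multiset_map_count]
  apply Finset.sum_subset
  · intro P hP
    rw [Multiset.mem_toFinset] at hP
    obtain ⟨a, b, c⟩ := hm P hP
    rw [mem_irrs]
    exact ⟨a, b, hn ▸ natDegree_le_of_dvd c hf.ne_zero⟩
  · intro P _ hP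
    rw [Multiset.mem_toFinset, ← Multiset.count_eq_zero] at hP
    rw [hP, zero_smul]

open Classical in
/-- The identity `L' = L · (L'/L)`, coefficient by coefficient: sum `deg f · χ(f)` over the monic `f`
of degree `k + 1`, expanding the degree by `natDegree_eq_sum`. -/
lemma monicSum_rec (χ : F[X] → ℂ) (hone : χ 1 = 1)
    (hmul : ∀ f g, f.Monic → g.Monic → χ (f * g) = χ f * χ g) (k : ℕ) :
    ((k : ℂ) + 1) * monicSum χ (k + 1) =
      ∑ x ∈ Finset.HasAntidiagonal.antidiagonal k, monicSum χ x.1 * lamb χ (x.2 + 1) := by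
  have hpow : ∀ (P : F[X]) (i : ℕ), P.Monic → χ (P ^ i) = χ P ^ i := by
    intro P i hP
    induction i with
    | zero => simp [hone]
    | succ i ih => rw [pow_succ, pow_succ, hmul _ _ (hP.pow i) hP, ih]
  set n := k + 1 with hn
  have hL : ((k : ℂ) + 1) * monicSum χ n = ∑ P ∈ irrs F n, (P.natDegree : ℂ) *
      ∑ i ∈ Finset.range n, if P.natDegree * (i + 1) ≤ n then
        χ P ^ (i + 1) * monicSum χ (n - P.natDegree * (i + 1)) else 0 := by
    calc ((k : ℂ) + 1) * monicSum χ n = ∑ f ∈ monics F n, ∑ P ∈ irrs F n,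
          ∑ i ∈ Finset.range n, (P.natDegree : ℂ) * (if P ^ (i + 1) ∣ f then χ f else 0) := by
          rw [monicSum, Finset.mul_sum]
          refine Finset.sum_congr rfl fun f hf => ?_
          rw [mem_monics] at hf
          have h1 := congrArg (Nat.cast : ℕ → ℂ) (natDegree_eq_sum hf.1 hf.2)
          have h2 : ((k : ℂ) + 1) = (n : ℂ) := by rw [hn]; push_cast; rfl
          rw [h2, h1]
          push_cast
          rw [Finset.sum_mul]
          refine Finset.sum_congr rfl fun P _ => ?_
          rw [Finset.sum_mul]
          refine Finset.sum_congr rfl fun i _ => ?_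
          split_ifs <;> simp
      _ = ∑ P ∈ irrs F n, ∑ i ∈ Finset.range n, ∑ f ∈ monics F n,
            (P.natDegree : ℂ) * (if P ^ (i + 1) ∣ f then χ f else 0) := by
          rw [Finset.sum_comm]
          refine Finset.sum_congr rfl fun P _ => ?_
          rw [Finset.sum_comm]
      _ = _ := by
          refine Finset.sum_congr rfl fun P hP => ?_
          rw [mem_irrs] at hP
          rw [Finset.mul_sum]
          refine Finset.sum_congr rfl fun i _ => ?_
          rw [← Finset.mul_sum, sum_monics_dvd χ hmul n _ (hP.1.pow _), natDegree_pow, hpow _ _ hP.1,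
            mul_comm (i + 1)]
  rw [hL, ← Finset.Nat.sum_antidiagonal_swap, Finset.Nat.sum_antidiagonal_eq_sum_range_succ_mk]
  simp only [Prod.swap]
  have hR : ∀ j ∈ Finset.range (k + 1), monicSum χ (k - j) * lamb χ (j + 1) =
      ∑ P ∈ irrs F n, (P.natDegree : ℂ) * if P.natDegree ∣ j + 1 then
        χ P ^ ((j + 1) / P.natDegree) * monicSum χ (n - (j + 1)) else 0 := by
    intro j hj
    rw [Finset.mem_range] at hj
    have h1 : {P ∈ irrs F (j + 1) | P.natDegree ∣ j + 1}
        = {P ∈ irrs F n | P.natDegree ∣ j + 1} := by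
      ext P
      simp only [Finset.mem_filter, mem_irrs]
      constructor
      · rintro ⟨⟨a, b, c⟩, d⟩; exact ⟨⟨a, b, by omega⟩, d⟩
      · rintro ⟨⟨a, b, c⟩, d⟩; exact ⟨⟨a, b, Nat.le_of_dvd (Nat.succ_pos _) d⟩, d⟩
    rw [lamb, h1, Finset.sum_filter, Finset.mul_sum]
    refine Finset.sum_congr rfl fun P _ => ?_
    have h2 : k - j = n - (j + 1) := by omega
    rw [h2]
    split_ifs <;> ring
  rw [Finset.sum_congr rfl hR, Finset.sum_comm]
  refine Finset.sum_congr rfl fun P hP => ?_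
  rw [← Finset.mul_sum]
  congr 1
  rw [mem_irrs] at hP
  have hd := hP.2.1.natDegree_pos
  rw [← Finset.sum_filter, ← Finset.sum_filter]
  refine Finset.sum_nbij (fun i => P.natDegree * (i + 1) - 1) ?_ ?_ ?_ ?_
  · intro i hi
    simp only [Finset.mem_filter, Finset.mem_range] at hi ⊢
    have : 0 < P.natDegree * (i + 1) := by positivity
    rw [Nat.sub_add_cancel this]
    exact ⟨by omega, dvd_mul_right _ _⟩
  · intro a _ b _ hab
    have h1 : 0 < P.natDegree * (a + 1) := by positivity
    have h2 : 0 < P.natDegree * (b + 1) := by positivity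
    have h3 : P.natDegree * (a + 1) = P.natDegree * (b + 1) := by
      simp only at hab; omega
    have := Nat.eq_of_mul_eq_mul_left hd h3
    omega
  · intro j hj
    simp only [Finset.coe_filter, Finset.mem_range, Set.mem_ofPred_eq] at hj
    obtain ⟨h1, c, hc⟩ := hj
    have hc0 : c ≠ 0 := by rintro rfl; simp at hc
    obtain ⟨i, rfl⟩ := Nat.exists_eq_succ_of_ne_zero hc0
    refine ⟨i, ?_, ?_⟩
    · simp only [Finset.coe_filter, Finset.mem_range, Set.mem_ofPred_eq]
      have : i + 1 ≤ P.natDegree * (i + 1) := Nat.le_mul_of_pos_left _ hd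
      simp only [Nat.succ_eq_add_one] at hc
      constructor <;> omega
    · simp only [Nat.succ_eq_add_one] at hc
      simp only; omega
  · intro i hi
    have : 0 < P.natDegree * (i + 1) := by positivity
    rw [Nat.sub_add_cancel this, Nat.mul_div_cancel_left _ hd]

/-! ### Points over extensions of the base field -/

section Points
variable {E : Type*} [Field E]

open Classical in
/-- The elements of `E` fixed by the `j`-th power of the Frobenius of `F`. For `E` algebraically
closed and `j > 0` they form the extension of `F` of degree `j`. -/
noncomputable def fixPts (F E : Type*) [Field F] [Fintype F] [Field E] (j : ℕ) : Finset E :=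
  (X ^ (Fintype.card F) ^ j - X : E[X]).roots.toFinset

lemma one_lt_card_pow {j : ℕ} (hj : 0 < j) : 1 < Fintype.card F ^ j :=
  Nat.one_lt_pow hj.ne' Fintype.one_lt_card

lemma mem_fixPts {j : ℕ} (hj : 0 < j) {β : E} :
    β ∈ fixPts F E j ↔ β ^ (Fintype.card F) ^ j = β := by
  have h : (X ^ (Fintype.card F) ^ j - X : E[X]) ≠ 0 :=
    FiniteField.X_pow_card_sub_X_ne_zero E (one_lt_card_pow hj)
  simp [fixPts, h, sub_eq_zero]

variable [Algebra F E]

lemma card_fixPts [IsAlgClosed E] {j : ℕ} (hj : 0 < j) :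
    (fixPts F E j).card = Fintype.card F ^ j := by
  classical
  obtain ⟨p, hp⟩ := CharP.exists F
  obtain ⟨n, hpr, hn⟩ := FiniteField.card F p
  have : CharP E p := charP_of_injective_algebraMap (algebraMap F E).injective p
  have hs : (X ^ (Fintype.card F) ^ j - X : E[X]).Separable :=
    galois_poly_separable p _ (by
      rw [hn, ← pow_mul]; exact dvd_pow_self _ (Nat.mul_ne_zero n.ne_zero hj.ne'))
  rw [fixPts, Multiset.toFinset_card_of_nodup (nodup_roots hs),
    ← (IsAlgClosed.splits _).natDegree_eq_card_roots,
    FiniteField.X_pow_card_sub_X_natDegree_eq E (one_lt_card_pow hj)]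

lemma aeval_frob (f : F[X]) (β : E) (i : ℕ) :
    aeval (β ^ Fintype.card F ^ i) f = (aeval β f) ^ Fintype.card F ^ i := by
  induction i with
  | zero => simp
  | succ i ih =>
    have := aeval_algHom_apply (FiniteField.frobeniusAlgHom F E) (β ^ Fintype.card F ^ i) f
    simp only [FiniteField.coe_frobeniusAlgHom] at this
    rw [pow_succ, pow_mul, this, ih, ← pow_mul]

lemma natDegree_dvd_iff {P : F[X]} (hi : Irreducible P) {β : E} (hβ : aeval β P = 0) {j : ℕ} :
    P.natDegree ∣ j ↔ β ^ (Fintype.card F) ^ j = β := by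
  rw [hi.natDegree_dvd_iff_dvd_X_pow_card_pow_sub_X, ← hi.dvd_iff_aeval_eq_zero hβ]
  simp [sub_eq_zero]

lemma roots_irreducible {P : F[X]} (hi : Irreducible P) {β : E} (hβ : aeval β P = 0) :
    (P.map (algebraMap F E)).roots =
      (Multiset.range P.natDegree).map fun i => β ^ (Fintype.card F) ^ i := by
  have hinj : ∀ i, i < P.natDegree → ∀ k, k < P.natDegree → i < k →
      β ^ (Fintype.card F) ^ i ≠ β ^ (Fintype.card F) ^ k := by
    intro i hi' k hk hik h
    obtain ⟨l, rfl⟩ := Nat.exists_eq_add_of_lt hik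
    have hpow : ∀ n, Function.Injective fun x : E => x ^ Fintype.card F ^ n := by
      intro n
      have : (fun x : E => x ^ Fintype.card F ^ n) = (FiniteField.frobeniusAlgHom F E)^[n] := by
        funext x
        induction n with
        | zero => simp
        | succ n ih =>
          rw [Function.iterate_succ_apply', ← ih, FiniteField.coe_frobeniusAlgHom, pow_succ, pow_mul]
      rw [this]
      exact (FiniteField.frobeniusAlgHom F E).injective.iterate n
    have h1 : β = β ^ Fintype.card F ^ (l + 1) := by
      apply hpow i
      simp only
      rw [h, ← pow_mul, ← pow_add]
      congr 2; ring
    have h2 := (natDegree_dvd_iff hi hβ).2 h1.symm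
    have := Nat.le_of_dvd (Nat.succ_pos l) h2
    omega
  have hnd : ((Multiset.range P.natDegree).map fun i => β ^ (Fintype.card F) ^ i).Nodup := by
    apply Multiset.Nodup.map_on _ (Multiset.nodup_range _)
    intro x hx y hy hxy
    rw [Multiset.mem_range] at hx hy
    rcases lt_trichotomy x y with h | h | h
    · exact absurd hxy (hinj x hx y hy h)
    · exact h
    · exact absurd hxy.symm (hinj y hy x hx h)
  symm
  apply Multiset.eq_of_le_of_card_le
  · rw [Multiset.le_iff_subset hnd]
    intro x hx
    obtain ⟨i, _, rfl⟩ := Multiset.mem_map.1 hx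
    rw [mem_roots (map_ne_zero hi.ne_zero), IsRoot.def, eval_map_algebraMap, aeval_frob, hβ,
      zero_pow (pow_ne_zero _ Fintype.card_ne_zero)]
  · rw [Multiset.card_map, Multiset.card_range]
    exact (card_roots' _).trans natDegree_map_le

/-- For `β` of degree dividing `j` with minimal polynomial `P`, the power `Res(P, H)^(j / deg P)` is
the norm of `H(β)` from the extension of degree `j` to `F`, the exponent on the right being
`1 + q + ⋯ + q^(j-1)`. -/
lemma resultant_pow_eq [IsAlgClosed E] {P : F[X]} (hP : P.Monic) (hi : Irreducible P) {β : E}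
    (hβ : aeval β P = 0) (H : F[X]) {j : ℕ} (hj : P.natDegree ∣ j) :
    algebraMap F E (resultant P H ^ (j / P.natDegree)) =
      (aeval β H) ^ ∑ i ∈ Finset.range j, Fintype.card F ^ i := by
  rw [map_pow, algebraMap_resultant hP, roots_irreducible hi hβ, Multiset.map_map]
  obtain ⟨m, rfl⟩ := hj
  rw [Nat.mul_div_cancel_left _ hi.natDegree_pos]
  have h1 : ((Multiset.range P.natDegree).map
      ((fun x => aeval x H) ∘ fun i => β ^ Fintype.card F ^ i)).prod =
      ∏ i ∈ Finset.range P.natDegree, aeval (β ^ Fintype.card F ^ i) H := rfl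
  rw [h1]
  simp only [aeval_frob]
  rw [← Finset.prod_pow_eq_pow_sum]
  have h2 : ∀ m, (aeval β H) ^ Fintype.card F ^ (P.natDegree * m) = aeval β H := by
    intro m
    have := (natDegree_dvd_iff hi hβ).1 (dvd_mul_right P.natDegree m)
    rw [← aeval_frob, this]
  induction m with
  | zero => simp
  | succ m ih =>
    rw [mul_add, mul_one, Finset.prod_range_add, pow_succ, ih]
    congr 1
    refine Finset.prod_congr rfl fun i _ => ?_
    rw [pow_add, pow_mul, h2]

open Classical in
/-- The coefficients of the logarithmic derivative count points: group the elements of the extension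
of degree `j` by their minimal polynomial, then by the norm of `H`. -/
lemma lamb_eq [IsAlgClosed E] (χ : MulChar F ℂ) (H : F[X]) {j : ℕ} (hj : 0 < j) :
    lamb (fun f => χ (resultant f H)) j = ∑ u : F, χ u *
      (Finset.card {β ∈ fixPts F E j | (aeval β H) ^ (∑ i ∈ Finset.range j, Fintype.card F ^ i)
        = algebraMap F E u} : ℕ) := by
  have hint : ∀ β ∈ fixPts F E j, IsIntegral F β := by
    intro β hβ
    rw [mem_fixPts hj] at hβ
    refine ⟨X ^ (Fintype.card F) ^ j - X, monic_X_pow_sub (by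
      rw [degree_X]; exact_mod_cast one_lt_card_pow hj), ?_⟩
    simp [hβ]
  have hm : ∀ β ∈ fixPts F E j, minpoly F β ∈ {P ∈ irrs F j | P.natDegree ∣ j} := by
    intro β hβ
    have h1 := hint β hβ
    have h3 := minpoly.irreducible h1
    rw [mem_fixPts hj] at hβ
    have h2 := (natDegree_dvd_iff h3 (minpoly.aeval F β)).2 hβ
    rw [Finset.mem_filter, mem_irrs]
    exact ⟨⟨minpoly.monic h1, h3, Nat.le_of_dvd hj h2⟩, h2⟩
  calc lamb (fun f => χ (resultant f H)) j
      = ∑ P ∈ irrs F j with P.natDegree ∣ j, ∑ β ∈ fixPts F E j with minpoly F β = P,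
          χ (resultant (minpoly F β) H ^ (j / (minpoly F β).natDegree)) := by
        refine Finset.sum_congr rfl fun P hP => ?_
        rw [Finset.mem_filter, mem_irrs] at hP
        obtain ⟨⟨hP1, hP2, _⟩, hP3⟩ := hP
        rw [Finset.sum_congr rfl (g := fun _ => χ (resultant P H) ^ (j / P.natDegree))
          (fun β hβ => by rw [(Finset.mem_filter.1 hβ).2, map_pow]), Finset.sum_const, nsmul_eq_mul]
        congr 2
        obtain ⟨β, hβ⟩ := IsAlgClosed.exists_aeval_eq_zero E P hP2.degree_pos.ne'
        have h1 := roots_irreducible hP2 hβ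
        have h2 : P.natDegree = (P.map (algebraMap F E)).roots.card := by
          rw [h1]; simp
        have hnd : (P.map (algebraMap F E)).roots.Nodup := by
          apply nodup_roots
          rw [separable_map]
          exact PerfectField.separable_of_irreducible hP2
        rw [h2, ← Multiset.toFinset_card_of_nodup hnd]
        congr 1
        ext x
        rw [Multiset.mem_toFinset, mem_roots (map_ne_zero hP2.ne_zero), IsRoot.def,
          eval_map_algebraMap, Finset.mem_filter, mem_fixPts hj]
        constructor
        · intro hx
          exact ⟨(natDegree_dvd_iff hP2 hx).1 hP3,
            (minpoly.eq_of_irreducible_of_monic hP2 hx hP1).symm⟩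
        · rintro ⟨_, rfl⟩
          exact minpoly.aeval F x
    _ = ∑ β ∈ fixPts F E j, χ (resultant (minpoly F β) H ^ (j / (minpoly F β).natDegree)) :=
        Finset.sum_fiberwise_of_maps_to hm _
    _ = ∑ β ∈ fixPts F E j, ∑ u : F, χ u *
          (if (aeval β H) ^ (∑ i ∈ Finset.range j, Fintype.card F ^ i) = algebraMap F E u
            then 1 else 0) := by
        refine Finset.sum_congr rfl fun β hβ => ?_
        have h1 := hint β hβ
        have h2 := (Finset.mem_filter.1 (hm β hβ)).2
        rw [← resultant_pow_eq (minpoly.monic h1) (minpoly.irreducible h1) (minpoly.aeval F β) H h2]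
        simp only [(algebraMap F E).injective.eq_iff, mul_ite, mul_one, mul_zero]
        rw [Finset.sum_ite_eq]
        simp
    _ = _ := by
        rw [Finset.sum_comm]
        refine Finset.sum_congr rfl fun u _ => ?_
        rw [← Finset.mul_sum, Finset.sum_boole]

end Points
end LSeries

/-! ### The Weil bound -/

section Weil
variable {F E : Type*} [Field F] [Fintype F] [Field E] [Algebra F E]

open Classical in
/-- The number of `β` in the extension of `F` of degree `j` such that the norm of `H(β)` down to `F`
is `u`. The norm is written as the power with exponent `1 + q + ⋯ + q^(j-1)`. -/
noncomputable def ptCount (E : Type*) [Field E] [Algebra F E] (H : F[X]) (j : ℕ) (u : F) : ℕ :=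
  Finset.card {β ∈ fixPts F E j | (aeval β H) ^ (∑ i ∈ Finset.range j, Fintype.card F ^ i)
        = algebraMap F E u}

lemma lamb_eq' [IsAlgClosed E] (χ : MulChar F ℂ) (H : F[X]) {j : ℕ} (hj : 0 < j) :
    lamb (fun f => χ (resultant f H)) j = ∑ u : F, χ u * (ptCount E H j u : ℂ) :=
  lamb_eq χ H hj

/-- Stepanov's bound for `ptCount` over the extension of degree `2 i`. Translating `θ` to the origin
turns the condition `β^(s²) = β`, `s = q^i`, into `β^(s²) = β + c`. -/
lemma ptCount_le [IsAlgClosed E] (H : F[X]) (hH : H ≠ 0) (θ : E)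
    (hcop : (rootMultiplicity θ (H.map (algebraMap F E))).Coprime (Fintype.card F - 1)) :
    ∃ C : ℕ, ∀ i > 0, ∀ u : F, u ≠ 0 →
      (Fintype.card F - 1) * ptCount E H (2 * i) u ≤
        Fintype.card F ^ (2 * i) + C * Fintype.card F ^ i := by
  classical
  obtain ⟨p, hp⟩ := CharP.exists F
  obtain ⟨n, hpr, hn⟩ := FiniteField.card F p
  have : CharP E p := charP_of_injective_algebraMap (algebraMap F E).injective p
  have : Fact p.Prime := ⟨hpr⟩
  set q := Fintype.card F with hq
  have hq1 : 1 < q := Fintype.one_lt_card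
  set Hm := H.map (algebraMap F E) with hHm
  set v := rootMultiplicity θ Hm
  have hHm0 : Hm ≠ 0 := map_ne_zero hH
  obtain ⟨g, hg, hgθ⟩ := exists_eq_pow_rootMultiplicity_mul_and_not_dvd Hm hHm0 θ
  rw [dvd_iff_isRoot] at hgθ
  obtain ⟨C, hC⟩ := stepanov (L := E) p (d := q - 1) (w := (Hm.comp (X + C θ)).natDegree) (v := v)
    (by omega) (Hm.comp (X + C θ)) (g.comp (X + C θ))
    (by conv_lhs => rw [hg]
        simp [v])
    (by rw [coeff_zero_eq_eval_zero, eval_comp]; simpa using hgθ) hcop le_rfl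
  refine ⟨C, fun i hi u hu => ?_⟩
  set s := q ^ i with hs
  set e := ∑ l ∈ Finset.range i, q ^ l with he
  have hse : s = (q - 1) * e + 1 := by
    have := geom_sum_mul_add (q - 1) i
    rw [Nat.sub_add_cancel hq1.le] at this
    rw [hs, he, ← this, mul_comm]
  have hs2 : q ^ (2 * i) = s * s := by rw [hs, two_mul, pow_add]
  have he2 : ∑ l ∈ Finset.range (2 * i), q ^ l = e * (s + 1) := by
    rw [two_mul, Finset.sum_range_add, mul_add, mul_one, he, hs, Finset.sum_mul, add_comm]
    congr 1
    refine Finset.sum_congr rfl fun l _ => ?_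
    rw [pow_add, mul_comm]
  have key := hC (n * i) e s (by rw [hs, hn, ← pow_mul]) hse (Nat.one_lt_pow hi.ne' hq1)
    (θ - θ ^ (s * s)) (algebraMap F E u) (by simpa using hu)
    (Finset.image (fun β => β - θ) {β ∈ fixPts F E (2 * i) |
      (aeval β H) ^ (∑ l ∈ Finset.range (2 * i), q ^ l) = algebraMap F E u}) ?_
  · rw [Finset.card_image_of_injective _ (sub_left_injective)] at key
    rw [hs2]
    exact key
  · intro β' hβ'
    obtain ⟨β, hβ, rfl⟩ := Finset.mem_image.1 hβ'
    rw [Finset.mem_filter, mem_fixPts (by omega), ← hq, hs2, he2] at hβ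
    constructor
    · have h1 : s * s = p ^ (n * (2 * i)) := by rw [← hs2, hn, ← pow_mul]
      have h2 : (β - θ) ^ (s * s) = β ^ (s * s) - θ ^ (s * s) := by
        rw [h1]; exact sub_pow_char_pow ..
      rw [h2, hβ.1]; ring
    · rw [← hβ.2, eval_comp, hHm]
      simp

open Classical in
/-- Away from the roots of `H`, every `β` in the extension of degree `j` has its norm of `H(β)` in
`F \ {0}`. -/
lemma le_sum_ptCount [IsAlgClosed E] (H : F[X]) (hH : H ≠ 0) {j : ℕ} (hj : 0 < j) :
    Fintype.card F ^ j ≤ (∑ u : F with u ≠ 0, ptCount E H j u) + H.natDegree := by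
  set q := Fintype.card F with hq
  have himg : Finset.univ.image (algebraMap F E) = fixPts F E 1 := by
    apply Finset.eq_of_subset_of_card_le
    · intro x hx
      obtain ⟨y, _, rfl⟩ := Finset.mem_image.1 hx
      rw [mem_fixPts one_pos, pow_one, ← map_pow, FiniteField.pow_card]
    · rw [card_fixPts one_pos, Finset.card_image_of_injective _ (algebraMap F E).injective, pow_one]
      rfl
  have hsub : fixPts F E j ⊆ ((Finset.univ.filter fun u : F => u ≠ 0).biUnion fun u =>
      {β ∈ fixPts F E j | (aeval β H) ^ (∑ i ∈ Finset.range j, Fintype.card F ^ i)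
        = algebraMap F E u}) ∪ (H.map (algebraMap F E)).roots.toFinset := by
    intro β hβ
    rw [Finset.mem_union, Finset.mem_biUnion]
    by_cases h0 : aeval β H = 0
    · right
      simp [hH, h0]
    · left
      set w := (aeval β H) ^ (∑ i ∈ Finset.range j, q ^ i) with hw
      have hw0 : w ≠ 0 := pow_ne_zero _ h0
      have hwq : w ^ q = w := by
        rw [mem_fixPts hj] at hβ
        have h1 := aeval_frob H β j
        rw [hβ] at h1
        apply mul_right_cancel₀ h0
        have h2 : (∑ i ∈ Finset.range j, q ^ i) * q + 1 =
            (∑ i ∈ Finset.range j, q ^ i) + q ^ j := by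
          rw [← Finset.sum_range_succ, Finset.sum_range_succ', Finset.sum_mul]
          simp [pow_succ]
        rw [hw, ← pow_mul, ← pow_succ, h2, pow_add, ← h1]
      have : w ∈ Finset.univ.image (algebraMap F E) := by
        rw [himg, mem_fixPts one_pos, pow_one, hwq]
      obtain ⟨u, _, hu⟩ := Finset.mem_image.1 this
      refine ⟨u, ?_, ?_⟩
      · rw [Finset.mem_filter]
        refine ⟨Finset.mem_univ _, ?_⟩
        rintro rfl
        rw [map_zero] at hu
        exact hw0 hu.symm
      · rw [Finset.mem_filter]
        exact ⟨hβ, hu.symm⟩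
  calc q ^ j = (fixPts F E j).card := (card_fixPts hj).symm
    _ ≤ _ := Finset.card_le_card hsub
    _ ≤ _ := (Finset.card_union_le _ _)
    _ ≤ _ := by
      apply Nat.add_le_add Finset.card_biUnion_le
      exact (Multiset.toFinset_card_le _).trans ((card_roots' _).trans natDegree_map_le)

lemma mulChar_norm_le_one (χ : MulChar F ℂ) (u : F) : ‖χ u‖ ≤ 1 := by
  by_cases hu : u = 0
  · rw [hu, MulChar.map_zero, norm_zero]; exact zero_le_one
  · obtain ⟨ζ, hζ, h⟩ := χ.apply_mem_rootsOfUnity_orderOf hu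
    have : NeZero (orderOf χ) := ⟨χ.orderOf_pos.ne'⟩
    rw [← h]
    exact (Complex.norm_eq_one_of_mem_rootsOfUnity hζ).le

/-- The upper bounds `ptCount_le` for all `u`, together with the lower bound `le_sum_ptCount` on
their sum, control `∑_u |N(u) - q^(2i)/(q-1)|`; the main term drops out because `∑ χ = 0`. -/
lemma lamb_bound [IsAlgClosed E] (χ : MulChar F ℂ) (hχ : χ ≠ 1) (H : F[X]) (hH : H ≠ 0) (θ : E)
    (hcop : (rootMultiplicity θ (H.map (algebraMap F E))).Coprime (Fintype.card F - 1)) :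
    ∃ K : ℝ, ∀ i > 0, ‖lamb (fun f => χ (resultant f H)) (2 * i)‖ ≤ K * (Fintype.card F : ℝ) ^ i := by
  classical
  obtain ⟨C, hC⟩ := ptCount_le H hH θ hcop
  refine ⟨2 * C + H.natDegree, fun i hi => ?_⟩
  have hlow := le_sum_ptCount (E := E) H hH (j := 2 * i) (by omega)
  set q := Fintype.card F with hq
  have hq1 : 1 < q := Fintype.one_lt_card
  have hcast : ((q - 1 : ℕ) : ℝ) = (q : ℝ) - 1 := by push_cast [hq1.le]; ring
  have hq0 : (0 : ℝ) < (q : ℝ) - 1 := by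
    have : (1 : ℝ) < q := by exact_mod_cast hq1
    linarith
  have hqi : (1 : ℝ) ≤ (q : ℝ) ^ i := one_le_pow₀ (by exact_mod_cast hq1.le)
  -- `x u` is `q - 1` times the deviation of the count at `u` from its expected value.
  set x : F → ℝ := fun u => ((q : ℝ) - 1) * ptCount E H (2 * i) u - (q : ℝ) ^ (2 * i) with hx
  have hx1 : ∀ u : F, u ≠ 0 → |x u| ≤ 2 * C * (q : ℝ) ^ i - x u := by
    intro u hu
    have h1 : ((q : ℝ) - 1) * ptCount E H (2 * i) u ≤ (q : ℝ) ^ (2 * i) + C * (q : ℝ) ^ i := by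
      have := hC i hi u hu
      rw [← hcast]
      exact_mod_cast this
    have h2 : 0 ≤ (C : ℝ) * (q : ℝ) ^ i := by positivity
    rw [abs_le]
    simp only [hx]
    constructor <;> linarith
  have hcard : (Finset.univ.filter fun u : F => u ≠ 0).card = q - 1 := by
    rw [Finset.filter_ne', Finset.card_erase_of_mem (Finset.mem_univ _), Finset.card_univ]
  have hsum : (∑ u : F with u ≠ 0, x u) ≥ - (((q : ℝ) - 1) * H.natDegree) := by
    have h1 : (q : ℝ) ^ (2 * i) ≤ (∑ u : F with u ≠ 0, (ptCount E H (2 * i) u : ℝ)) + H.natDegree := by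
      exact_mod_cast hlow
    rw [hx, Finset.sum_sub_distrib, ← Finset.mul_sum, Finset.sum_const, hcard, nsmul_eq_mul, hcast,
      ← mul_sub, ge_iff_le, ← mul_neg]
    apply mul_le_mul_of_nonneg_left _ hq0.le
    linarith
  have habs : (∑ u : F with u ≠ 0, |x u|) ≤
      ((q : ℝ) - 1) * ((2 * C + H.natDegree) * (q : ℝ) ^ i) := by
    calc (∑ u : F with u ≠ 0, |x u|) ≤ ∑ u : F with u ≠ 0, (2 * C * (q : ℝ) ^ i - x u) :=
          Finset.sum_le_sum fun u hu => hx1 u (Finset.mem_filter.1 hu).2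
      _ = ((q : ℝ) - 1) * (2 * C * (q : ℝ) ^ i) - ∑ u : F with u ≠ 0, x u := by
          rw [Finset.sum_sub_distrib, Finset.sum_const, hcard, nsmul_eq_mul, hcast]
      _ ≤ ((q : ℝ) - 1) * (2 * C * (q : ℝ) ^ i) + ((q : ℝ) - 1) * H.natDegree := by linarith
      _ ≤ ((q : ℝ) - 1) * (2 * C * (q : ℝ) ^ i) + ((q : ℝ) - 1) * (H.natDegree * (q : ℝ) ^ i) := by
          gcongr
          exact le_mul_of_one_le_right (by positivity) hqi
      _ = _ := by ring
  have hlam : ((q : ℂ) - 1) * lamb (fun f => χ (resultant f H)) (2 * i) =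
      ∑ u : F with u ≠ 0, χ u * (x u : ℂ) := by
    rw [lamb_eq' (E := E) χ H (by omega), Finset.mul_sum]
    have h0 : ∑ u : F, χ u * (x u : ℂ) = ∑ u : F with u ≠ 0, χ u * (x u : ℂ) := by
      symm
      apply Finset.sum_subset (Finset.filter_subset _ _)
      intro u _ hu
      simp only [Finset.mem_filter, Finset.mem_univ, true_and, not_not] at hu
      rw [hu, MulChar.map_zero, zero_mul]
    rw [← h0]
    have h1 : ∀ u : F, χ u * (x u : ℂ) =
        ((q : ℂ) - 1) * (χ u * (ptCount E H (2 * i) u : ℂ)) - χ u * (q : ℂ) ^ (2 * i) := by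
      intro u; simp only [hx]; push_cast; ring
    simp only [h1]
    rw [Finset.sum_sub_distrib, ← Finset.sum_mul, MulChar.sum_eq_zero_of_ne_one hχ]
    ring
  have hn : ((q : ℝ) - 1) * ‖lamb (fun f => χ (resultant f H)) (2 * i)‖ ≤
      ((q : ℝ) - 1) * ((2 * C + H.natDegree) * (q : ℝ) ^ i) := by
    have h1 : ‖((q : ℂ) - 1)‖ = (q : ℝ) - 1 := by
      have : ((q : ℂ) - 1) = (((q : ℝ) - 1 : ℝ) : ℂ) := by push_cast; ring
      rw [this, Complex.norm_real, Real.norm_of_nonneg hq0.le]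
    rw [← h1, ← norm_mul, hlam, h1]
    refine (norm_sum_le _ _).trans (le_trans (Finset.sum_le_sum fun u _ => ?_) habs)
    rw [norm_mul, Complex.norm_real, Real.norm_eq_abs]
    exact mul_le_of_le_one_left (abs_nonneg _) (mulChar_norm_le_one χ u)
  exact le_of_mul_le_mul_left hn hq0

end Weil

/-- `Res(f, H)` depends only on `f` modulo the radical `W` of `H`; the parity condition on the
degrees removes the sign in the formula for the resultant. -/
lemma resultant_congr {F E : Type*} [Field F] [Field E] [Algebra F E] [IsAlgClosed E]
    {H W : F[X]} (hH : H.Monic) (hroots : ∀ x : E, aeval x H = 0 → aeval x W = 0)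
    {f g : F[X]} (hfg : W ∣ f - g) {j : ℕ} (hj : Even j)
    (hdeg : f.natDegree = g.natDegree + j) : resultant f H = resultant g H := by
  have key : resultant H f = resultant H g := by
    apply (algebraMap F E).injective
    rw [algebraMap_resultant hH, algebraMap_resultant hH]
    congr 1
    apply Multiset.map_congr rfl
    intro x hx
    have hx0 : aeval x H = 0 := by
      have := isRoot_of_mem_roots hx
      rwa [IsRoot.def, eval_map_algebraMap] at this
    obtain ⟨c, hc⟩ := hfg
    have h1 := congrArg (aeval x) hc
    rw [map_sub, map_mul, hroots x hx0, zero_mul, sub_eq_zero] at h1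
    exact h1
  rw [resultant_comm f H, resultant_comm g H, key, hdeg, add_mul, pow_add]
  rw [(hj.mul_right _).neg_one_pow, mul_one]

lemma chi_mul {F : Type*} [Field F] (χ : MulChar F ℂ) (H : F[X]) (f g : F[X]) (hf : f.Monic) (hg : g.Monic) :
    χ (resultant (f * g) H) = χ (resultant f H) * χ (resultant g H) := by
  rw [hf.natDegree_mul hg, resultant_mul_left _ _ _ _ le_rfl, map_mul]

lemma chi_one {F : Type*} [Field F] (χ : MulChar F ℂ) (H : F[X]) : χ (resultant 1 H) = 1 := by
  rw [resultant_one_left]; simp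

section Weil
variable {F E : Type*} [Field F] [Fintype F] [Field E] [Algebra F E]

/-- For `k ≥ deg W`, adjusting the residue modulo `W` from `f` to `f₀ f` permutes the monic
polynomials of degree `k` and multiplies `χ(Res(f, H))` by `χ(Res(f₀, H)) ≠ 1`. Hence their sum
vanishes. -/
lemma monicSum_eq_zero [IsAlgClosed E] (χ : MulChar F ℂ) {H W : F[X]} (hH : H.Monic)
    (hW : W.Monic) (hroots : ∀ x : E, aeval x H = 0 → aeval x W = 0)
    (hD : 0 < W.natDegree)
    {f₀ : F[X]} (hf₀ : f₀.Monic) (hcop : IsCoprime W f₀) (hev : Even f₀.natDegree)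
    (hne : χ (resultant f₀ H) ≠ 1) {k : ℕ} (hk : W.natDegree ≤ k) :
    monicSum (fun f => χ (resultant f H)) k = 0 := by
  classical
  have hW1 : W ≠ 1 := by rintro rfl; simp at hD
  -- `σ f` is monic of the same degree as `f` and congruent to `f₀ f` modulo `W`.
  set σ : F[X] → F[X] := fun f => f + ((f₀ * f) %ₘ W - f %ₘ W) with hσ
  have hlow : ∀ f, ((f₀ * f) %ₘ W - f %ₘ W).natDegree < W.natDegree := fun f =>
    lt_of_le_of_lt (natDegree_sub_le _ _) (max_lt (natDegree_modByMonic_lt _ hW hW1)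
      (natDegree_modByMonic_lt _ hW hW1))
  have hmod : ∀ f, W ∣ f - f %ₘ W := fun f =>
    ⟨f /ₘ W, by have := modByMonic_add_div f W; rw [sub_eq_iff_eq_add]; conv_lhs => rw [← this]
                ring⟩
  have hσdvd : ∀ f, W ∣ f₀ * f - σ f := fun f => by
    have : f₀ * f - σ f = (f₀ * f - (f₀ * f) %ₘ W) - (f - f %ₘ W) := by rw [hσ]; ring
    rw [this]
    exact dvd_sub (hmod _) (hmod _)
  have hmem : ∀ f ∈ monics F k, σ f ∈ monics F k := by
    intro f hf
    rw [mem_monics] at hf ⊢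
    have h1 : ((f₀ * f) %ₘ W - f %ₘ W).natDegree < f.natDegree := by
      rw [hf.2]; exact (hlow f).trans_le hk
    exact ⟨hf.1.add_of_left (degree_lt_degree h1),
      (natDegree_add_eq_left_of_natDegree_lt h1).trans hf.2⟩
  have hinj : Set.InjOn σ (monics F k) := by
    intro f _ g _ hfg
    have h1 : W ∣ f₀ * (f - g) := by
      have := dvd_sub (hσdvd f) (hσdvd g)
      rw [hfg] at this
      convert this using 1
      ring
    have h2 : W ∣ f - g := hcop.dvd_of_dvd_mul_left h1
    have h3 : f %ₘ W = g %ₘ W := by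
      rw [← sub_eq_zero, ← sub_modByMonic, (modByMonic_eq_zero_iff_dvd hW).2 h2]
    have h4 : (f₀ * f) %ₘ W = (f₀ * g) %ₘ W := by
      rw [← sub_eq_zero, ← sub_modByMonic, ← mul_sub, (modByMonic_eq_zero_iff_dvd hW).2 h1]
    simp only [hσ] at hfg
    rw [h3, h4] at hfg
    exact add_right_cancel hfg
  have hsurj : Set.SurjOn σ (monics F k) (monics F k) :=
    Finset.surjOn_of_injOn_of_card_le σ hmem hinj le_rfl
  have hval : ∀ f ∈ monics F k, χ (resultant (σ f) H) = χ (resultant f₀ H) * χ (resultant f H) := by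
    intro f hf
    have h1 := mem_monics.1 hf
    have h2 := mem_monics.1 (hmem f hf)
    rw [← chi_mul χ H _ _ hf₀ h1.1, resultant_congr (E := E) hH hroots (hσdvd f) hev]
    rw [hf₀.natDegree_mul h1.1, h1.2, h2.2, add_comm]
  have hS : χ (resultant f₀ H) * monicSum (fun f => χ (resultant f H)) k =
      monicSum (fun f => χ (resultant f H)) k := by
    rw [monicSum, Finset.mul_sum]
    exact Finset.sum_nbij σ hmem hinj hsurj fun f hf => (hval f hf).symm
  by_contra hne0
  exact hne (mul_right_cancel₀ hne0 (hS.trans (one_mul _).symm))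

/-- The character `f ↦ χ(Res(f, H))` is nontrivial on monic polynomials of even degree coprime to `W`.
Otherwise `χ(u) = 1` for every norm `u ≠ 0` of a value `H(β)` with `β` in an extension of even
degree `2 j`. Then `lamb` at `2 j` is the full number of points, about `q^(2j)`, contradicting
`lamb_bound` for large `j`. -/
lemma exists_twist [IsAlgClosed E] (χ : MulChar F ℂ) (hχ : χ ≠ 1) {H W : F[X]} (hH : H ≠ 0)
    (hroots : ∀ x : E, aeval x W = 0 → aeval x H = 0) (θ : E)
    (hcop : (rootMultiplicity θ (H.map (algebraMap F E))).Coprime (Fintype.card F - 1)) :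
    ∃ f₀ : F[X], f₀.Monic ∧ IsCoprime W f₀ ∧ Even f₀.natDegree ∧ χ (resultant f₀ H) ≠ 1 := by
  classical
  obtain ⟨K, hK⟩ := lamb_bound χ hχ H hH θ hcop
  have hq1 : (1 : ℝ) < Fintype.card F := by exact_mod_cast Fintype.one_lt_card
  obtain ⟨i, hi⟩ := pow_unbounded_of_one_lt (K + H.natDegree) hq1
  obtain ⟨j, hj0, hj⟩ : ∃ j > 0, K + H.natDegree < (Fintype.card F : ℝ) ^ j :=
    ⟨i + 1, Nat.succ_pos i, hi.trans_le (pow_le_pow_right₀ hq1.le (Nat.le_succ i))⟩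
  by_contra! hno
  have hall : ∀ u : F, u ≠ 0 → χ u ≠ 1 → ptCount E H (2 * j) u = 0 := by
    intro u hu hχu
    rw [ptCount, Finset.card_eq_zero, Finset.filter_eq_empty_iff]
    intro β hβ hβu
    have hj2 : 0 < 2 * j := by omega
    rw [mem_fixPts hj2] at hβ
    have hint : IsIntegral F β := ⟨X ^ (Fintype.card F) ^ (2 * j) - X, monic_X_pow_sub (by
      rw [degree_X]; exact_mod_cast one_lt_card_pow hj2), by simp [hβ]⟩
    have hirr := minpoly.irreducible hint
    have hm := minpoly.monic hint
    have hdvd := (natDegree_dvd_iff hirr (minpoly.aeval F β)).2 hβ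
    have hR := resultant_pow_eq hm hirr (minpoly.aeval F β) H hdvd
    rw [hβu, (algebraMap F E).injective.eq_iff] at hR
    refine hχu ?_
    -- The power of the minimal polynomial of `β` with degree `2 j` is the excluded `f₀`.
    have h1 := hno (minpoly F β ^ (2 * j / (minpoly F β).natDegree)) (hm.pow _) ?_ ?_
    · rw [← h1, ← hR]
      congr 1
      exact (resultant_pow_left _ _ _ _ (by rw [hm.leadingCoeff]; simp) le_rfl).symm
    · apply IsCoprime.pow_right
      rw [isCoprime_comm, hirr.coprime_iff_not_dvd, ← hirr.dvd_iff_aeval_eq_zero (minpoly.aeval F β)]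
      intro h
      rw [hroots β h, zero_pow] at hβu
      · apply hu
        rw [← (algebraMap F E).injective.eq_iff, ← hβu, map_zero]
      · have : 0 < ∑ i ∈ Finset.range (2 * j), Fintype.card F ^ i :=
          Finset.sum_pos (fun i _ => pow_pos Fintype.card_pos _) (by simpa using hj0.ne')
        omega
    · rw [natDegree_pow, Nat.div_mul_cancel hdvd]
      exact even_two_mul j
  have hlam : lamb (fun f => χ (resultant f H)) (2 * j) =
      ((∑ u : F with u ≠ 0, ptCount E H (2 * j) u : ℕ) : ℂ) := by
    rw [lamb_eq' (E := E) χ H (by omega), Nat.cast_sum]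
    symm
    rw [Finset.sum_filter]
    refine Finset.sum_congr rfl fun u _ => ?_
    split_ifs with hu
    · by_cases h : χ u = 1
      · rw [h, one_mul]
      · rw [hall u hu h]; simp
    · rw [not_not] at hu
      rw [hu, MulChar.map_zero, zero_mul]
  have h1 := hK j hj0
  rw [hlam, Complex.norm_natCast] at h1
  have h2 : (Fintype.card F : ℝ) ^ (2 * j) ≤
      ((∑ u : F with u ≠ 0, ptCount E H (2 * j) u : ℕ) : ℝ) + H.natDegree := by
    exact_mod_cast le_sum_ptCount (E := E) H hH (j := 2 * j) (by omega)
  have h3 : (1 : ℝ) ≤ (Fintype.card F : ℝ) ^ j := one_le_pow₀ hq1.le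
  have h4 : (H.natDegree : ℝ) ≤ H.natDegree * (Fintype.card F : ℝ) ^ j :=
    le_mul_of_one_le_right (by positivity) h3
  have h5 : (Fintype.card F : ℝ) ^ j * (Fintype.card F : ℝ) ^ j ≤
      (K + H.natDegree) * (Fintype.card F : ℝ) ^ j := by
    rw [← pow_add, ← two_mul]; linarith
  exact absurd (le_of_mul_le_mul_right h5 (by linarith)) (not_le.2 hj)

lemma monicSum_zero (χ : F[X] → ℂ) (h : χ 1 = 1) : monicSum χ 0 = 1 := by
  have : monics F 0 = {1} := by
    ext f
    rw [mem_monics, Finset.mem_singleton]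
    constructor
    · rintro ⟨h1, h2⟩; exact h1.natDegree_eq_zero.1 h2
    · rintro rfl; simp
  rw [monicSum, this, Finset.sum_singleton, h]

lemma monicSum_one (χ : MulChar F ℂ) (H : F[X]) :
    monicSum (fun f => χ (resultant f H)) 1 = ∑ x : F, χ (H.eval x) := by
  rw [monicSum]
  symm
  refine Finset.sum_bij (fun x _ => X - C x) ?_ ?_ ?_ ?_
  · intro x _; rw [mem_monics]; exact ⟨monic_X_sub_C x, natDegree_X_sub_C x⟩
  · intro a _ b _ hab; simpa using hab
  · intro f hf
    rw [mem_monics] at hf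
    refine ⟨-f.coeff 0, Finset.mem_univ _, ?_⟩
    rw [C_neg, sub_neg_eq_add]
    exact (hf.1.eq_X_add_C hf.2).symm
  · intro x _
    rw [natDegree_X_sub_C, resultant_X_sub_C_left _ _ _ le_rfl]

/-- The Weil bound for the multiplicative character sum of `H`. The polynomial `W` has the same roots
as `H`, and some root multiplicity of `H` is assumed prime to `q - 1`. -/
theorem weil_bound [IsAlgClosed E] (χ : MulChar F ℂ) (hχ : χ ≠ 1) {H W : F[X]} (hH : H.Monic)
    (hW : W.Monic) (hroots : ∀ x : E, aeval x H = 0 ↔ aeval x W = 0) (hD : 0 < W.natDegree)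
    (θ : E)
    (hcop : (rootMultiplicity θ (H.map (algebraMap F E))).Coprime (Fintype.card F - 1)) :
    ‖∑ x : F, χ (H.eval x)‖ ≤ (W.natDegree - 1 : ℕ) * √(Fintype.card F) := by
  classical
  obtain ⟨K, hK⟩ := lamb_bound χ hχ H hH.ne_zero θ hcop
  obtain ⟨f₀, h1, h2, h3, h4⟩ := exists_twist χ hχ hH.ne_zero (fun x hx => (hroots x).2 hx) θ hcop
  have hzero : ∀ k, W.natDegree ≤ k → monicSum (fun f => χ (resultant f H)) k = 0 := fun k hk =>
    monicSum_eq_zero χ hH hW (fun x hx => (hroots x).1 hx) hD h1 h2 h3 h4 hk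
  set a := monicSum (fun f => χ (resultant f H)) with ha
  set L : ℂ[X] := ∑ k ∈ Finset.range W.natDegree, monomial k (a k) with hL
  have hLc : ∀ k, L.coeff k = a k := by
    intro k
    rw [hL, finsetSum_coeff]
    simp only [coeff_monomial]
    rw [Finset.sum_ite_eq']
    split_ifs with hk
    · rfl
    · rw [hzero k (by simpa using hk)]
  have hLd : L.natDegree ≤ W.natDegree - 1 := by
    refine natDegree_sum_le_of_forall_le _ _ fun k hk => (natDegree_monomial_le _).trans ?_
    rw [Finset.mem_range] at hk; omega
  have hmain := coeff_one_bound L (W.natDegree - 1) hLd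
    (by rw [hLc, ha, monicSum_zero _ (chi_one χ H)]) (lamb fun f => χ (resultant f H))
    (fun k => by
      simp only [hLc]
      exact monicSum_rec _ (chi_one χ H) (fun f g hf hg => chi_mul χ H f g hf hg) k)
    (√(Fintype.card F)) K (Real.sqrt_pos.2 (by exact_mod_cast Fintype.card_pos)) ?_
  · rw [← monicSum_one, ← ha, ← hLc]
    exact hmain
  · intro k hk hk0
    obtain ⟨i, rfl⟩ := hk
    rw [← two_mul, pow_mul, Real.sq_sqrt (by positivity)]
    exact hK i (by omega)

end Weil

/-! ### The polynomials `(X^n - 1)/(X - 1)` -/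

/-- The polynomial `1 + X + ⋯ + X^(n-1) = (X^n - 1)/(X - 1)`. -/
noncomputable def geomPoly (R : Type*) [Semiring R] (n : ℕ) : R[X] := ∑ i ∈ Finset.range n, X ^ i

lemma geomPoly_mul (R : Type*) [Ring R] (n : ℕ) : geomPoly R n * (X - 1) = X ^ n - 1 :=
  geom_sum_mul X n

lemma geomPoly_monic (R : Type*) [Ring R] {n : ℕ} (hn : 0 < n) : (geomPoly R n).Monic :=
  monic_geom_sum_X hn.ne'

lemma natDegree_geomPoly (R : Type*) [Field R] {n : ℕ} (hn : 0 < n) :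
    (geomPoly R n).natDegree = n - 1 := by
  have h := congrArg natDegree (geomPoly_mul R n)
  rw [← C_1, natDegree_X_pow_sub_C, (geomPoly_monic R hn).natDegree_mul (monic_X_sub_C _),
    natDegree_X_sub_C] at h
  omega

lemma map_geomPoly {R S : Type*} [Semiring R] [Semiring S] (f : R →+* S) (n : ℕ) :
    (geomPoly R n).map f = geomPoly S n := by
  simp [geomPoly, Polynomial.map_sum]

lemma eval_geomPoly_mul {R : Type*} [CommRing R] (n : ℕ) (x : R) :
    (geomPoly R n).eval x * (x - 1) = x ^ n - 1 := by
  have := congrArg (eval x) (geomPoly_mul R n)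
  simpa using this

lemma rootMultiplicity_geomPoly_zero {E : Type*} [Field E] {n : ℕ} {θ : E} (h : θ ^ n ≠ 1) :
    rootMultiplicity θ (geomPoly E n) = 0 := by
  apply rootMultiplicity_eq_zero
  intro hr
  have := eval_geomPoly_mul n θ
  rw [hr, zero_mul] at this
  exact h (sub_eq_zero.1 this.symm)

lemma rootMultiplicity_pow' {E : Type*} [Field E] (P : E[X]) (k : ℕ) (θ : E) :
    rootMultiplicity θ (P ^ k) = k * rootMultiplicity θ P := by
  classical
  rw [← count_roots, roots_pow, Multiset.count_nsmul, count_roots]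

lemma rootMultiplicity_geomPoly {E : Type*} [Field E] (p : ℕ) [Fact p.Prime] [CharP E p] {i k : ℕ}
    (hk : (k : E) ≠ 0) {θ : E} (hθ : θ ^ k = 1) (hθ1 : θ ≠ 1) :
    rootMultiplicity θ (geomPoly E (p ^ i * k)) = p ^ i := by
  have hk0 : 0 < k := Nat.pos_of_ne_zero (by rintro rfl; simp at hk)
  have hp0 : 0 < p ^ i := pow_pos (Fact.out : p.Prime).pos i
  have h1 : geomPoly E (p ^ i * k) * (X - 1) = (X ^ k - 1) ^ p ^ i := by
    rw [geomPoly_mul, sub_pow_char_pow, one_pow, ← pow_mul, mul_comm]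
  have h2 : rootMultiplicity θ (X - 1 : E[X]) = 0 := by
    apply rootMultiplicity_eq_zero
    simpa [sub_eq_zero] using hθ1
  have hne : (X ^ k - 1 : E[X]) ≠ 0 := by
    rw [← C_1]; exact X_pow_sub_C_ne_zero hk0 1
  have h3 : rootMultiplicity θ (X ^ k - 1 : E[X]) = 1 := by
    apply le_antisymm
    · exact rootMultiplicity_le_one_of_separable (X_pow_sub_one_separable_iff.2 hk) θ
    · apply (rootMultiplicity_pos hne).2
      simp [hθ]
  have h4 : rootMultiplicity θ ((X ^ k - 1 : E[X]) ^ p ^ i) = p ^ i := by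
    rw [rootMultiplicity_pow', h3, mul_one]
  rwa [← h1, rootMultiplicity_mul (by rw [h1]; exact pow_ne_zero _ hne), h2, add_zero] at h4

/-- Unless `m` is `n` times a power of `p`, some root multiplicity of `A B^(q-2)` is prime to `q - 1`.
If `m = p^i m'` with `m' > 1` prime to `p`, a primitive `m'`-th root of unity has multiplicity
`(q - 2) p^i`. If `m` is a power of `p`, a primitive `n`-th root of unity has multiplicity `1`. -/
lemma exists_theta {F E : Type*} [Field F] [Fintype F] [Field E] [Algebra F E] [IsAlgClosed E]
    (p : ℕ) (hp : p.Prime) [CharP F p] {m n : ℕ} (hn : 0 < n) (hnm : n < m) (hmn : n.Coprime m)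
    (hnot : ¬ ∃ i : ℕ, m = n * p ^ i) (hq : 3 ≤ Fintype.card F) :
    ∃ θ : E, (rootMultiplicity θ
      ((geomPoly F n * geomPoly F m ^ (Fintype.card F - 2)).map (algebraMap F E))).Coprime
        (Fintype.card F - 1) := by
  have : Fact p.Prime := ⟨hp⟩
  have : CharP E p := charP_of_injective_algebraMap (algebraMap F E).injective p
  have hpq : p ∣ Fintype.card F := by
    rw [← CharP.cast_eq_zero_iff F p]; exact FiniteField.cast_card_eq_zero F
  have hprim : ∀ k : ℕ, (k : E) ≠ 0 → ∃ θ : E, IsPrimitiveRoot θ k := by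
    intro k hk
    have : NeZero (k : E) := ⟨hk⟩
    exact HasEnoughRootsOfUnity.exists_primitiveRoot E k
  have hmult : ∀ θ : E, rootMultiplicity θ
      ((geomPoly F n * geomPoly F m ^ (Fintype.card F - 2)).map (algebraMap F E)) =
      rootMultiplicity θ (geomPoly E n) +
        (Fintype.card F - 2) * rootMultiplicity θ (geomPoly E m) := by
    intro θ
    rw [Polynomial.map_mul, Polynomial.map_pow, map_geomPoly, map_geomPoly, rootMultiplicity_mul,
      rootMultiplicity_pow']
    exact mul_ne_zero (geomPoly_monic E hn).ne_zero
      (pow_ne_zero _ (geomPoly_monic E (hn.trans hnm)).ne_zero)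
  obtain ⟨i, m', hm', hm⟩ := Nat.exists_eq_pow_mul_and_not_dvd (hn.trans hnm).ne' p hp.ne_one
  have hm'0 : (m' : E) ≠ 0 := by rwa [Ne, CharP.cast_eq_zero_iff E p]
  rcases Nat.lt_or_ge 1 m' with h1 | h1
  · obtain ⟨θ, hθ⟩ := hprim m' hm'0
    refine ⟨θ, ?_⟩
    have hA : θ ^ n ≠ 1 := by
      intro h
      have h2 : m' ∣ n := hθ.dvd_of_pow_eq_one n h
      have h3 : m' ∣ m := hm ▸ dvd_mul_left _ _
      have := Nat.eq_one_of_dvd_coprimes hmn h2 h3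
      omega
    have h2 : rootMultiplicity θ (geomPoly E m) = p ^ i := by
      rw [hm]
      exact rootMultiplicity_geomPoly p hm'0 hθ.pow_eq_one (hθ.ne_one h1)
    rw [hmult, rootMultiplicity_geomPoly_zero hA, h2, zero_add]
    apply Nat.Coprime.mul_left
    · have : Fintype.card F - 1 = (Fintype.card F - 2) + 1 := by omega
      rw [this]; simp
    · apply Nat.Coprime.pow_left
      rw [hp.coprime_iff_not_dvd]
      intro h
      have h5 : p ∣ 1 := by
        have := Nat.dvd_sub hpq h
        rwa [Nat.sub_sub_self (by omega)] at this
      exact hp.one_lt.ne' (Nat.dvd_one.1 h5)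
  · have hm'1 : m' = 1 := by
      have : m' ≠ 0 := by rintro rfl; simp at hm'
      omega
    rw [hm'1, mul_one] at hm
    have hi : i ≠ 0 := by rintro rfl; rw [pow_zero] at hm; omega
    have hn1 : n ≠ 1 := by rintro rfl; exact hnot ⟨i, by rw [one_mul, hm]⟩
    have hpn : ¬ p ∣ n := by
      intro h
      have := Nat.eq_one_of_dvd_coprimes hmn h (hm ▸ dvd_pow_self p hi)
      exact hp.one_lt.ne' this
    have hn0 : (n : E) ≠ 0 := by rwa [Ne, CharP.cast_eq_zero_iff E p]
    obtain ⟨θ, hθ⟩ := hprim n hn0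
    refine ⟨θ, ?_⟩
    have hB : θ ^ m ≠ 1 := by
      intro h
      have := Nat.eq_one_of_dvd_coprimes hmn dvd_rfl (hθ.dvd_of_pow_eq_one m h)
      exact hn1 this
    have h2 : rootMultiplicity θ (geomPoly E n) = 1 := by
      have := rootMultiplicity_geomPoly p (i := 0) hn0 hθ.pow_eq_one (hθ.ne_one (by omega))
      simpa using this
    rw [hmult, rootMultiplicity_geomPoly_zero hB, h2]
    simp

/-! ### Detecting powers by characters -/

/-- A character of order `gcd(k, q - 1)` is trivial only on `k`-th powers. -/
lemma eq_pow_of_mulChar {F : Type*} [Field F] [Fintype F] (k : ℕ) (χ : MulChar F ℂ)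
    (hχ : orderOf χ = Nat.gcd k (Fintype.card F - 1)) {c : F} (hc : χ c = 1) :
    ∃ x : F, x ≠ 0 ∧ c = x ^ k := by
  classical
  obtain ⟨g, hg⟩ := IsCyclic.exists_generator (α := Fˣ)
  have hc0 : c ≠ 0 := by
    rintro rfl
    rw [MulChar.map_zero] at hc
    exact zero_ne_one hc
  obtain ⟨l, hl⟩ := (Submonoid.mem_powers_iff _ _).1 (mem_powers_iff_mem_zpowers.2 (hg (Units.mk0 c hc0)))
  have hcl : c = (g : F) ^ l := by
    rw [← Units.val_pow_eq_pow_val, hl]; rfl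
  have h1 : χ ^ l = 1 := by
    rw [MulChar.eq_iff hg, MulChar.pow_apply_coe, ← map_pow, ← hcl, hc, MulChar.one_apply_coe]
  have h2 := orderOf_dvd_of_pow_eq_one h1
  rw [hχ] at h2
  obtain ⟨r, hr⟩ := h2
  have hgc : g ^ (Fintype.card F - 1) = 1 := by
    rw [← Fintype.card_units]; exact pow_card_eq_one
  refine ⟨((g ^ (Nat.gcdA k (Fintype.card F - 1))) ^ r : Fˣ), Units.ne_zero _, ?_⟩
  rw [hcl, ← Units.val_pow_eq_pow_val, ← Units.val_pow_eq_pow_val]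
  congr 1
  have h3 : g ^ (Nat.gcd k (Fintype.card F - 1)) = (g ^ (Nat.gcdA k (Fintype.card F - 1))) ^ k := by
    rw [← zpow_natCast, Nat.gcd_eq_gcd_ab, zpow_add, zpow_mul (n := Nat.gcdB _ _)]
    rw [zpow_natCast, hgc, one_zpow, mul_one, mul_comm, zpow_mul, zpow_natCast]
  rw [hr, pow_mul, h3, ← pow_mul, ← pow_mul, mul_comm]

/-- Orthogonality for the powers of `χ`, including the value `c = 0`, where every power (also the
zeroth, the trivial character) vanishes. -/
lemma sum_pow_mulChar {F : Type*} [Field F] [Fintype F] (χ : MulChar F ℂ) (c : F) :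
    (χ c ≠ 1 → ∑ i ∈ Finset.range (orderOf χ), (χ ^ i) c = 0) ∧
      ‖∑ i ∈ Finset.range (orderOf χ), (χ ^ i) c‖ ≤ orderOf χ := by
  by_cases hc : c = 0
  · subst hc
    simp [MulChar.map_zero]
  · obtain ⟨u, rfl⟩ := Ne.isUnit hc
    simp only [MulChar.pow_apply_coe]
    constructor
    · intro h
      have h1 := geom_sum_mul (χ u) (orderOf χ)
      rw [← MulChar.pow_apply_coe, pow_orderOf_eq_one, MulChar.one_apply_coe, sub_self] at h1
      exact (mul_eq_zero.1 h1).resolve_right (sub_ne_zero.2 h)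
    · refine (norm_sum_le _ _).trans ?_
      calc _ ≤ ∑ i ∈ Finset.range (orderOf χ), (1 : ℝ) := Finset.sum_le_sum fun i _ => by
            rw [norm_pow]; exact pow_le_one₀ (norm_nonneg _) (mulChar_norm_le_one χ _)
        _ = _ := by simp

/-! ### The permutation binomial -/

/-- The arithmetic at the end: with `s = √q`, `B = (m - 2)²` and `c = 2 (m - 1)`, the hypothesis
implies `s² - c ≤ B s`, whence `s² ≤ B² + 2 c`. -/
lemma ineq_final {q m n d : ℕ} (hn : 0 < n) (hnm : n < m) (hd1 : 1 ≤ d) (hd : d ≤ m - n)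
    (h : (q : ℝ) - (n + m - 2 : ℕ) ≤ d + (d - 1 : ℕ) * ((n + m - 3 : ℕ) * √q)) :
    (q : ℤ) ≤ ((m : ℤ) - 2) ^ 4 + 4 * m - 4 := by
  obtain ⟨d, rfl⟩ := Nat.exists_eq_add_of_le' hd1
  obtain ⟨n, rfl⟩ := Nat.exists_eq_add_of_le' (show 1 ≤ n from hn)
  obtain ⟨k, rfl⟩ := Nat.exists_eq_add_of_lt hnm
  have e1 : n + 1 + (n + 1 + k + 1) - 2 = 2 * n + k + 1 := by omega
  have e2 : n + 1 + (n + 1 + k + 1) - 3 = 2 * n + k := by omega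
  have hdk : d ≤ k := by omega
  rw [e1, e2, Nat.add_sub_cancel] at h
  set s := √(q : ℝ) with hs
  have hs0 : 0 ≤ s := Real.sqrt_nonneg _
  have hss : s * s = q := Real.mul_self_sqrt (by positivity)
  have hdk' : (d : ℝ) ≤ k := by exact_mod_cast hdk
  have hn0 : (0 : ℝ) ≤ n := by positivity
  have hk0 : (0 : ℝ) ≤ k := by positivity
  have h1 : (d : ℝ) * ((2 * n + k : ℕ) * s) ≤ ((n : ℝ) + k) ^ 2 * s := by
    rw [← mul_assoc]
    apply mul_le_mul_of_nonneg_right _ hs0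
    push_cast
    calc (d : ℝ) * (2 * n + k) ≤ k * (2 * n + k) := by gcongr
      _ ≤ _ := by nlinarith [sq_nonneg (n : ℝ)]
  set B : ℝ := ((n : ℝ) + k) ^ 2 with hB
  set c : ℝ := 2 * ((n : ℝ) + k + 1) with hc
  have hB0 : 0 ≤ B := sq_nonneg _
  have hc0 : 0 < c := by positivity
  have h2 : s * s - c ≤ B * s := by
    push_cast at h h1
    rw [hss]; linarith
  have h3 : (q : ℝ) ≤ B ^ 2 + 2 * c := by
    rw [← hss]
    by_cases h4 : s * s ≤ c
    · nlinarith [sq_nonneg B]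
    · by_contra! h5
      have h6 : (s * s - c) * (s * s - c) ≤ (B * s) * (B * s) :=
        mul_self_le_mul_self (by linarith) h2
      have h7 : 0 < (s * s) * (s * s - (B ^ 2 + 2 * c)) :=
        mul_pos (by linarith) (by linarith)
      nlinarith [mul_pos hc0 hc0]
  have h4 : (q : ℝ) ≤ (((n + 1 + k + 1 : ℕ) : ℝ) - 2) ^ 4 + 4 * (n + 1 + k + 1 : ℕ) - 4 := by
    refine h3.trans (le_of_eq ?_)
    rw [hB, hc]; push_cast; ring
  exact_mod_cast h4

/-- The theorem when the exponents are coprime. -/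
lemma coprime_case {F : Type*} [Field F] [Fintype F] (p : ℕ) (hp : p.Prime) [CharP F p]
    {m n : ℕ} (hn : 0 < n) (hnm : n < m) (hmn : n.Coprime m) {a : F} (ha : a ≠ 0)
    (hinj : Function.Injective (fun x : F => x ^ m + a * x ^ n))
    (hnot : ¬ ∃ i : ℕ, m = n * p ^ i) (hq : 3 ≤ Fintype.card F) :
    (Fintype.card F : ℤ) ≤ ((m : ℤ) - 2) ^ 4 + 4 * m - 4 := by
  classical
  set q := Fintype.card F with hqdef
  set A := geomPoly F n with hA
  set B := geomPoly F m with hB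
  set H := A * B ^ (q - 2) with hHdef
  set W := A * B with hWdef
  have hm : 0 < m := hn.trans hnm
  have hAm : A.Monic := geomPoly_monic F hn
  have hBm : B.Monic := geomPoly_monic F hm
  have hHm : H.Monic := hAm.mul (hBm.pow _)
  have hWm : W.Monic := hAm.mul hBm
  have hWdeg : W.natDegree = n + m - 2 := by
    rw [hWdef, hAm.natDegree_mul hBm, natDegree_geomPoly F hn, natDegree_geomPoly F hm]
    omega
  have hq2 : q - 2 ≠ 0 := by omega
  have hroots : ∀ x : AlgebraicClosure F, aeval x H = 0 ↔ aeval x W = 0 := by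
    intro x
    simp [hHdef, hWdef, hq2]
  have hrootsF : ∀ t : F, H.eval t = 0 → W.eval t = 0 := by
    intro t
    simp [hHdef, hWdef, hq2]
  have hD : 0 < W.natDegree := by
    rw [hWdeg]
    by_contra! h
    obtain ⟨rfl⟩ : n = 1 := by omega
    omega
  obtain ⟨θ, hθ⟩ := exists_theta (F := F) (E := AlgebraicClosure F) p hp hn hnm hmn hnot hq
  set d := Nat.gcd (m - n) (q - 1) with hd
  have hdq : d ∣ q - 1 := Nat.gcd_dvd_right _ _
  have hd0 : 0 < d := Nat.gcd_pos_of_pos_right _ (by omega)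
  have hdmn : d ≤ m - n := Nat.gcd_le_left _ (by omega)
  obtain ⟨χ, hχ⟩ := MulChar.exists_mulChar_orderOf F hdq (Complex.isPrimitiveRoot_exp d (Nat.ne_of_gt hd0))
  -- For `t ≠ 1`, a value `-a H(t)` that is an `(m-n)`-th power `x ^ (m-n)` gives `f (x t) = f x`.
  have hne1 : ∀ t : F, t ≠ 1 → χ (-a * H.eval t) ≠ 1 := by
    intro t ht h1
    obtain ⟨x, hx0, hx⟩ := eq_pow_of_mulChar (m - n) χ hχ h1
    have hBt : B.eval t ≠ 0 := by
      intro h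
      rw [hHdef, eval_mul, eval_pow, h, zero_pow hq2, mul_zero, mul_zero] at hx
      exact pow_ne_zero _ hx0 hx.symm
    have hHB : H.eval t * B.eval t = A.eval t := by
      have := FiniteField.pow_card_sub_one_eq_one _ hBt
      rw [hHdef, eval_mul, eval_pow, mul_assoc, ← pow_succ,
        show q - 2 + 1 = q - 1 by omega, this, mul_one]
    have hA1 := eval_geomPoly_mul n t
    have hB1 := eval_geomPoly_mul m t
    have key : -a * (t ^ n - 1) = x ^ (m - n) * (t ^ m - 1) := by
      rw [← hA1, ← hB1, ← hx, ← hA, ← hB, ← hHB]; ring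
    have hxm : x ^ m = x ^ (m - n) * x ^ n := by
      rw [← pow_add]; congr 1; omega
    have hf : x * t = x := by
      apply hinj
      simp only [mul_pow, hxm]
      linear_combination (-x ^ n) * key
    exact ht (by simpa [hx0] using hf)
  have hT1 : ‖∑ t : F, ∑ i ∈ Finset.range d, (χ ^ i) (-a * H.eval t)‖ ≤ d := by
    rw [Finset.sum_eq_single 1]
    · have := (sum_pow_mulChar χ (-a * H.eval 1)).2
      rwa [hχ] at this
    · intro t _ ht
      have := (sum_pow_mulChar χ (-a * H.eval t)).1 (hne1 t ht)
      rwa [hχ] at this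
    · simp
  have hT2 : ∑ t : F, ∑ i ∈ Finset.range d, (χ ^ i) (-a * H.eval t) =
      ∑ t : F, (1 : MulChar F ℂ) (-a * H.eval t) +
        ∑ i ∈ Finset.range (d - 1), (χ ^ (i + 1)) (-a) * ∑ t : F, (χ ^ (i + 1)) (H.eval t) := by
    rw [Finset.sum_comm, show d = d - 1 + 1 by omega, Finset.sum_range_succ', add_comm,
      Nat.add_sub_cancel, pow_zero]
    simp only [map_mul, Finset.mul_sum]
  have hmain : (q : ℝ) - (n + m - 2 : ℕ) ≤ ‖∑ t : F, (1 : MulChar F ℂ) (-a * H.eval t)‖ := by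
    have h1 : ∑ t : F, (1 : MulChar F ℂ) (-a * H.eval t) =
        ((Finset.univ.filter fun t : F => H.eval t ≠ 0).card : ℂ) := by
      rw [Finset.card_filter, Nat.cast_sum]
      refine Finset.sum_congr rfl fun t _ => ?_
      split_ifs with h
      · rw [MulChar.one_apply (Ne.isUnit (mul_ne_zero (neg_ne_zero.2 ha) h))]; simp
      · rw [not_not.1 h, mul_zero, MulChar.map_zero]; simp
    have h2 : (Finset.univ.filter fun t : F => H.eval t = 0).card ≤ n + m - 2 := by
      rw [← hWdeg]
      refine le_trans (Finset.card_le_card ?_) ((Multiset.toFinset_card_le _).trans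
        (card_roots' W))
      intro t ht
      rw [Multiset.mem_toFinset, mem_roots hWm.ne_zero]
      exact hrootsF t (Finset.mem_filter.1 ht).2
    have h3 := Finset.card_filter_add_card_filter_not (s := (Finset.univ : Finset F))
      (fun t : F => H.eval t = 0)
    rw [Finset.card_univ, ← hqdef] at h3
    rw [h1, Complex.norm_natCast, sub_le_iff_le_add]
    have h4 : q ≤ (Finset.univ.filter fun t : F => H.eval t ≠ 0).card + (n + m - 2) := by
      simp only [ne_eq]; omega
    exact_mod_cast h4
  have hrest : ‖∑ i ∈ Finset.range (d - 1), (χ ^ (i + 1)) (-a) * ∑ t : F, (χ ^ (i + 1)) (H.eval t)‖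
      ≤ (d - 1 : ℕ) * ((n + m - 3 : ℕ) * √(q : ℝ)) := by
    refine (norm_sum_le _ _).trans ?_
    calc _ ≤ ∑ i ∈ Finset.range (d - 1), ((n + m - 3 : ℕ) * √(q : ℝ)) := by
          refine Finset.sum_le_sum fun i hi => ?_
          have hχi : χ ^ (i + 1) ≠ 1 := by
            intro h
            have := Nat.le_of_dvd (Nat.succ_pos i) (orderOf_dvd_of_pow_eq_one h)
            rw [hχ] at this
            have := Finset.mem_range.1 hi
            omega
          have hw := weil_bound (χ ^ (i + 1)) hχi hHm hWm hroots hD θ hθ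
          rw [hWdeg, show n + m - 2 - 1 = n + m - 3 by omega] at hw
          rw [norm_mul]
          exact (mul_le_of_le_one_left (norm_nonneg _) (mulChar_norm_le_one _ _)).trans hw
      _ = _ := by simp
  apply ineq_final (d := d) hn hnm hd0 hdmn
  refine hmain.trans ?_
  rw [eq_sub_of_add_eq hT2.symm]
  exact (norm_sub_le _ _).trans (add_le_add hT1 hrest)

/-- If `x^m + a x^n` permutes `F_q` (with `m > n > 0`, `a ≠ 0`), where `q` is a power of
the prime `p`, then either `q ≤ (m-2)^4 + 4m - 4`, or `m = n·p^i` for some `i ≥ 0`. -/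
theorem permutation_binomial_NiederreiterRobinson_Turnwald
    (F : Type) [Field F] [Fintype F] (p : ℕ) (hp : p.Prime) (hchar : ringChar F = p)
    (m n : ℕ) (hn : 0 < n) (hnm : n < m) (a : F) (ha : a ≠ 0)
    (hperm : Function.Bijective (fun x : F => x ^ m + a * x ^ n)) :
    (Fintype.card F : ℤ) ≤ ((m : ℤ) - 2) ^ 4 + 4 * m - 4 ∨ ∃ i : ℕ, m = n * p ^ i := by
  have : CharP F p := ringChar.of_eq hchar
  by_cases hq : 3 ≤ Fintype.card F
  swap
  · left
    have h1 : 0 ≤ ((m : ℤ) - 2) ^ 4 := by positivity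
    omega
  rw [or_iff_not_imp_right]
  intro hnot
  obtain ⟨g, m', n', hg, hco, hm', hn'⟩ := Nat.exists_coprime' (m := m) (n := n)
    (Nat.gcd_pos_of_pos_right _ hn)
  subst hm' hn'
  have hn0 : 0 < n' := Nat.pos_of_mul_pos_right hn
  have hlt : n' < m' := lt_of_mul_lt_mul_right hnm (Nat.zero_le g)
  -- `f` is the reduced binomial composed with `x ↦ x ^ g`, so the reduced one is onto.
  have hsurj : Function.Surjective (fun x : F => x ^ m' + a * x ^ n') := by
    intro y
    obtain ⟨x, hx⟩ := hperm.2 y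
    refine ⟨x ^ g, ?_⟩
    simp only [← pow_mul, mul_comm g]
    exact hx
  have h := coprime_case p hp hn0 hlt hco.symm ha (Finite.injective_iff_surjective.2 hsurj)
    (fun ⟨i, hi⟩ => hnot ⟨i, by rw [hi]; ring⟩) hq
  have h2 : (0 : ℤ) ≤ (m' : ℤ) - 2 := by omega
  have h3 : (m' : ℤ) ≤ (m' * g : ℕ) := by exact_mod_cast Nat.le_mul_of_pos_right m' hg
  have h4 : ((m' : ℤ) - 2) ^ 4 ≤ (((m' * g : ℕ) : ℤ) - 2) ^ 4 := by gcongr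
  omega
end

section
/- Let p be a prime, let n, k > 0 be integers, and let a be a nonzero element of F_p, and suppose the polynomial x^n (x^k + a) permutes F_p. If gcd(k, p−1) = 5, then p = 11. If gcd(k, p−1) = 6, then p ∈ {7, 13, 19, 31}. If gcd(k, p−1) = 7, then p = 29. If gcd(k, p−1) = 8, then p = 17. -/
/-!
Write `d = gcd(k, p - 1)` and `p - 1 = d * e`. Since `f = x^n (x^k + a)` is a bijection of `F_p`,
the power sums `∑ f(x)^s` vanish for `0 < s < p - 1` (Hermite's criterion). For `s = d * t` the
binomial expansion turns this into

  `∑ C(d t, i) a^(d t - i) = 0`, over `0 ≤ i ≤ d t` with `i ≡ r t (mod e)`,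

for all `0 < t < e`, where the residue `r` does not depend on `t` (`hermite_relations`).
No term of such a sum is zero because `d t < p`, so the sum never has exactly one term. Applied to
`t = 1`, `t = ⌊(e - 1) / d⌋` and its successor, this forces `e ≤ d`, that is `p - 1 ≤ d ^ 2`
(`index_le`). For `d = 5, 6, 7, 8` the primes `p ≡ 1 (mod d)` obeying this bound are those claimed
together with `37`, `43`, `41` (for `d = 6, 7, 8`), and these three are excluded by the relations
for `t = 1` and `t = 2`.
-/

open Finset

/-- Hermite's criterion for `x^n (x^k + a)`, with the power sums over `F_p` evaluated. -/
lemma hermite_sum (p : ℕ) [Fact p.Prime] (n k : ℕ) (hn : 0 < n) (a : ZMod p)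
    (hperm : Function.Bijective (fun x : ZMod p => x ^ n * (x ^ k + a)))
    (s : ℕ) (hs : 0 < s) (hsp : s < p - 1) :
    ∑ i ∈ range (s + 1),
      (if p - 1 ∣ n * s + k * i then a ^ (s - i) * (s.choose i : ZMod p) else 0) = 0 := by
  have h1 : ∑ x : ZMod p, (x ^ n * (x ^ k + a)) ^ s = 0 := by
    rw [hperm.sum_comp (fun y : ZMod p => y ^ s)]
    exact FiniteField.sum_pow_lt_card_sub_one (ZMod p) s (by rwa [ZMod.card])
  have h2 : ∀ m : ℕ, 0 < m →
      ∑ x : ZMod p, x ^ m = if p - 1 ∣ m then (-1 : ZMod p) else 0 := by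
    intro m hm
    have h := FiniteField.sum_pow_units (ZMod p) m
    rw [ZMod.card] at h
    rw [← h, ← Finset.sum_subset (Finset.subset_univ (univ.filter fun x : ZMod p => x ≠ 0))]
    · symm
      refine Finset.sum_bij (fun x _ => (x : ZMod p)) ?_ ?_ ?_ ?_
      · intro x _; simp
      · intro x _ y _ hxy; exact Units.ext hxy
      · intro y hy
        exact ⟨Units.mk0 y (by simpa using hy), by simp, rfl⟩
      · intro x _; rfl
    · intro x _ hx
      have : x = 0 := by simpa using hx
      rw [this, zero_pow hm.ne']
  have h3 : ∀ x : ZMod p, (x ^ n * (x ^ k + a)) ^ s =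
      ∑ i ∈ range (s + 1), x ^ (n * s + k * i) * (a ^ (s - i) * (s.choose i : ZMod p)) := by
    intro x
    rw [mul_pow, add_pow, Finset.mul_sum]
    refine Finset.sum_congr rfl fun i _ => ?_
    ring
  simp_rw [h3] at h1
  rw [Finset.sum_comm] at h1
  simp_rw [← Finset.sum_mul] at h1
  rw [← neg_eq_zero, ← Finset.sum_neg_distrib] at h1
  refine (Finset.sum_congr rfl fun i _ => ?_).trans h1
  rw [h2 _ (Nat.add_pos_left (Nat.mul_pos hn hs) _)]
  split_ifs <;> simp

/-- The relations among the terms `C(d t, i) a^(d t - i)` supported on the residue class of `r t`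
modulo `e`; here `r ≡ -n / (k / d)` modulo `e`. -/
lemma hermite_relations (p : ℕ) [Fact p.Prime] (n k : ℕ) (hn : 0 < n) (a : ZMod p)
    (hperm : Function.Bijective (fun x : ZMod p => x ^ n * (x ^ k + a)))
    (d e : ℕ) (hd : 0 < d) (he : 0 < e) (hg : Nat.gcd k (p - 1) = d) (hde : p - 1 = d * e) :
    ∃ r < e, ∀ t, 0 < t → t < e →
      ∑ i ∈ range (d * t + 1), (if i % e = r * t % e then
        a ^ (d * t - i) * ((d * t).choose i : ZMod p) else 0) = 0 := by
  obtain ⟨k', rfl⟩ : d ∣ k := hg ▸ Nat.gcd_dvd_left _ _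
  have hc : Nat.Coprime k' e := by
    rw [hde, Nat.gcd_mul_left] at hg
    exact Nat.eq_of_mul_eq_mul_left hd (by rw [hg, mul_one])
  have : NeZero e := ⟨he.ne'⟩
  let u := ZMod.unitOfCoprime k' hc
  have hu : (u : ZMod e) = (k' : ZMod e) := rfl
  refine ⟨(-(n : ZMod e) * (↑u⁻¹ : ZMod e)).val, ZMod.val_lt _, fun t ht hte => ?_⟩
  have h := hermite_sum p n (d * k') hn a hperm (d * t) (Nat.mul_pos hd ht)
    (by rw [hde]; exact Nat.mul_lt_mul_of_pos_left hte hd)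
  refine (Finset.sum_congr rfl fun i _ => ?_).trans h
  refine if_congr ?_ rfl rfl
  rw [hde, show n * (d * t) + d * k' * i = d * (n * t + k' * i) by ring,
    Nat.mul_dvd_mul_iff_left hd, ← ZMod.natCast_eq_zero_iff]
  change i ≡ _ [MOD e] ↔ _
  rw [← ZMod.natCast_eq_natCast_iff]
  push_cast
  rw [ZMod.natCast_zmod_val, ← hu]
  have huu : (u : ZMod e) * (↑u⁻¹ : ZMod e) = 1 := u.mul_inv
  constructor
  · intro hi
    rw [hi]
    linear_combination (-(n : ZMod e) * t) * huu
  · intro hi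
    linear_combination (↑u⁻¹ : ZMod e) * hi - (i : ZMod e) * huu

/-- A relation cannot consist of a single term: if the least index `r t % e` of the residue class
lies in `[0, d t]`, then so does the next one. -/
lemma not_single_term (p : ℕ) [Fact p.Prime] (a : ZMod p) (ha : a ≠ 0)
    (d e r t : ℕ) (hd : 0 < d) (hde : p - 1 = d * e) (hte : t < e)
    (h : ∑ i ∈ range (d * t + 1), (if i % e = r * t % e then
        a ^ (d * t - i) * ((d * t).choose i : ZMod p) else 0) = 0)
    (hle : r * t % e ≤ d * t) : r * t % e + e ≤ d * t := by
  by_contra! hlt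
  have hsp : d * t < p := by
    have := Nat.mul_lt_mul_of_pos_left hte hd
    omega
  rw [Finset.sum_eq_single (r * t % e)] at h
  · rw [if_pos (Nat.mod_mod _ _)] at h
    rcases mul_eq_zero.mp h with h | h
    · exact pow_ne_zero _ ha h
    · rw [ZMod.natCast_eq_zero_iff] at h
      have hp : p.Prime := Fact.out
      have h4 : p ∣ (d * t).factorial := by
        rw [← Nat.choose_mul_factorial_mul_factorial hle, mul_assoc]
        exact Dvd.dvd.mul_right h _
      exact absurd (hp.dvd_factorial.mp h4) (by omega)
  · intro i hi hne
    rw [if_neg]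
    intro hmod
    have h5 : i < r * t % e + e := by have := Finset.mem_range.mp hi; omega
    have h6 := Nat.div_add_mod i e
    have h7 : i / e ≠ 0 := by
      intro h0
      rw [h0] at h6
      omega
    have h8 : e * 1 ≤ e * (i / e) := Nat.mul_le_mul_left _ (Nat.pos_of_ne_zero h7)
    omega
  · intro hni
    exact absurd (Finset.mem_range.mpr (by omega)) hni

/-- If `d t` and the residues of `r t` satisfy the conclusion of `not_single_term`, then `e ≤ d`. -/
lemma index_le (d e r : ℕ) (hd : 2 ≤ d) (hr : r < e)
    (h : ∀ t, 0 < t → t < e → r * t % e ≤ d * t → r * t % e + e ≤ d * t) : e ≤ d := by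
  by_contra! hlt
  have h1 := h 1 one_pos (by omega)
  simp only [mul_one, Nat.mod_eq_of_lt hr] at h1
  have hrd : d < r := by omega
  -- `t` is the last index with `d * t < e`; passing from `t` to `t + 1` adds `d` to `d * t` but
  -- `r > d` to the residue, so both wrap around `e` at this step,
  -- and then the residue ends up above `d * (t + 1) - e`.
  obtain ⟨t, ht⟩ : ∃ t, t = (e - 1) / d := ⟨_, rfl⟩
  have hm := Nat.div_add_mod (e - 1) d
  have hm' := Nat.mod_lt (e - 1) (show 0 < d by omega)
  rw [← ht] at hm
  have ht0 : 0 < t := by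
    rw [ht]; exact Nat.div_pos (by omega) (by omega)
  clear ht
  have hte : t + 1 < e := by
    have : 2 * t ≤ d * t := Nat.mul_le_mul_right _ hd
    omega
  have h2 := h t ht0 (by omega)
  have h3 := h (t + 1) (by omega) hte
  have h4 : r * (t + 1) % e = (r * t % e + r) % e := by
    rw [mul_add, mul_one, Nat.mod_add_mod]
  have h5 : r * t % e < e := Nat.mod_lt _ (by omega)
  have h6 : r * (t + 1) % e < e := Nat.mod_lt _ (by omega)
  rw [mul_add d, mul_one] at h3
  have h7 : e ≤ r * t % e + r := by omega
  rw [Nat.mod_eq_sub_mod h7,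
    Nat.mod_eq_of_lt (show r * t % e + r - e < e by omega)] at h4
  omega

/-- The bound `p - 1 = d e ≤ d ^ 2`, together with the relations themselves. -/
lemma exists_index (p : ℕ) [Fact p.Prime] (n k : ℕ) (hn : 0 < n) (a : ZMod p) (ha : a ≠ 0)
    (hperm : Function.Bijective (fun x : ZMod p => x ^ n * (x ^ k + a)))
    (d : ℕ) (hd : 2 ≤ d) (hg : Nat.gcd k (p - 1) = d) :
    ∃ e, 0 < e ∧ e ≤ d ∧ p = d * e + 1 ∧ ∃ r < e, ∀ t, 0 < t → t < e →
      ∑ i ∈ range (d * t + 1), (if i % e = r * t % e then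
        a ^ (d * t - i) * ((d * t).choose i : ZMod p) else 0) = 0 := by
  have hp2 : 2 ≤ p := (Fact.out : p.Prime).two_le
  obtain ⟨e, hde⟩ : d ∣ p - 1 := hg ▸ Nat.gcd_dvd_right _ _
  have he : 0 < e := by
    rcases Nat.eq_zero_or_pos e with rfl | h
    · omega
    · exact h
  obtain ⟨r, hr, hrel⟩ := hermite_relations p n k hn a hperm d e (by omega) he hg hde
  refine ⟨e, he, index_le d e r hd hr fun t ht hte => ?_, by omega, r, hr, hrel⟩
  exact not_single_term p a ha d e r t (by omega) hde hte (hrel t ht hte)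

lemma not_37 (a : ZMod 37) (ha : a ≠ 0) (r : ℕ) (hr : r < 6)
    (h : ∀ t, 0 < t → t < 6 →
      ∑ i ∈ range (6 * t + 1), (if i % 6 = r * t % 6 then
        a ^ (6 * t - i) * ((6 * t).choose i : ZMod 37) else 0) = 0) : False := by
  have h1 := h 1 (by norm_num) (by norm_num)
  have h2 := h 2 (by norm_num) (by norm_num)
  clear h
  interval_cases r <;> simp [Finset.sum_range_succ, Nat.choose] at h1 h2 <;>
    revert a <;> decide +kernel

lemma not_43 (a : ZMod 43) (ha : a ≠ 0) (r : ℕ) (hr : r < 6)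
    (h : ∀ t, 0 < t → t < 6 →
      ∑ i ∈ range (7 * t + 1), (if i % 6 = r * t % 6 then
        a ^ (7 * t - i) * ((7 * t).choose i : ZMod 43) else 0) = 0) : False := by
  have h1 := h 1 (by norm_num) (by norm_num)
  clear h
  interval_cases r <;> simp [Finset.sum_range_succ, Nat.choose] at h1 <;>
    revert a <;> decide +kernel

lemma not_41 (a : ZMod 41) (ha : a ≠ 0) (r : ℕ) (hr : r < 5)
    (h : ∀ t, 0 < t → t < 5 →
      ∑ i ∈ range (8 * t + 1), (if i % 5 = r * t % 5 then
        a ^ (8 * t - i) * ((8 * t).choose i : ZMod 41) else 0) = 0) : False := by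
  have h1 := h 1 (by norm_num) (by norm_num)
  clear h
  interval_cases r <;> simp [Finset.sum_range_succ, Nat.choose] at h1 <;>
    revert a <;> decide +kernel

/-- Suppose `x^n (x^k + a)` permutes the prime field `F_p` (with `n, k > 0`, `a ≠ 0`).
If `gcd(k, p-1) = 5` then `p = 11`; if `gcd(k, p-1) = 6` then `p ∈ {7, 13, 19, 31}`;
if `gcd(k, p-1) = 7` then `p = 29`; if `gcd(k, p-1) = 8` then `p = 17`. -/
theorem permutation_binomial_small_gcd (p : ℕ) (hp : p.Prime) (n k : ℕ)
    (hn : 0 < n) (hk : 0 < k) (a : ZMod p) (ha : a ≠ 0)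
    (hperm : Function.Bijective (fun x : ZMod p => x ^ n * (x ^ k + a))) :
    (Nat.gcd k (p - 1) = 5 → p = 11) ∧
    (Nat.gcd k (p - 1) = 6 → p = 7 ∨ p = 13 ∨ p = 19 ∨ p = 31) ∧
    (Nat.gcd k (p - 1) = 7 → p = 29) ∧
    (Nat.gcd k (p - 1) = 8 → p = 17) := by
  have : Fact p.Prime := ⟨hp⟩
  have key := exists_index p n k hn a ha hperm
  clear hperm
  refine ⟨fun hg => ?_, fun hg => ?_, fun hg => ?_, fun hg => ?_⟩
  · obtain ⟨e, he0, he, rfl, -⟩ := key _ (by norm_num) hg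
    clear key
    interval_cases e <;> revert hp <;> norm_num
  · obtain ⟨e, he0, he, rfl, r, hr, h⟩ := key _ (by norm_num) hg
    clear key
    rcases eq_or_ne e 6 with rfl | hne
    · exact (not_37 a ha r hr h).elim
    · clear h
      interval_cases e <;> revert hp hne <;> norm_num
  · obtain ⟨e, he0, he, rfl, r, hr, h⟩ := key _ (by norm_num) hg
    clear key
    rcases eq_or_ne e 6 with rfl | hne
    · exact (not_43 a ha r hr h).elim
    · clear h
      interval_cases e <;> revert hp hne <;> norm_num
  · obtain ⟨e, he0, he, rfl, r, hr, h⟩ := key _ (by norm_num) hg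
    clear key
    rcases eq_or_ne e 5 with rfl | hne
    · exact (not_41 a ha r hr h).elim
    · clear h
      interval_cases e <;> revert hp hne <;> norm_num
end

section
/- For every integer d > 0 there exists a constant Q(d) such that: for every prime power q ≥ Q(d) with q ≡ 1 (mod d), and for every integer n > 0 with gcd(n, q−1) = 1, there exists a nonzero element a of F_q such that the polynomial x^n (x^{(q−1)/d} + a) permutes F_q. -/
/-!
Let `q = |F|`, `s = (q - 1) / d`, and let `μ_d` be the group of `d`-th roots of unity of `F`.
If `a ≠ 0` is such that `(ζ + a) ^ s` takes one and the same nonzero value for all `ζ ∈ μ_d`, then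
`x ^ n * (x ^ s + a)` is injective: raising an equality of values at nonzero points to the power
`s` recovers `(x ^ s) ^ n`, hence `x ^ s`, hence `x ^ n`, hence `x`, because `n` is prime to `q - 1`
(`injective_of_pow_add_const`).

Such an `a` comes from the Hales–Jewett theorem instead of the usual character sum estimates.
Colour `y ≠ 0` by `y ^ s`, which takes at most `d` values. Hales–Jewett gives a finite `ι`,
depending only on `d`, and a monochromatic combinatorial line in `ι → μ_d` for the colouring pulled
back along an affine form `x ↦ v₀ + ∑ i, v i * x i`. The image of the line is `{c + b * ζ | ζ ∈ μ_d}`,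
and since the colouring is multiplicative `a = c / b` works, provided that `b`, `c` and all values
of the form are nonzero. These are nonvanishing conditions on `v`, bounded in number in terms
of `d` alone, so they can be met when `q` is large (`exists_generic_vector`).
-/

open Polynomial in
/-- Over a large enough field there is a vector `v` with nonzero pairing against every nonzero
vector whose entries lie in a given finite family `z`; "large enough" depends only on the sizes
of the index types. The vector is `(1, t, t ^ 2, …)` with `t` off the roots of finitely many
polynomials. -/
lemma exists_generic_vector (J K : Type) [Fintype J] [Fintype K] :
    ∃ Q : ℕ, ∀ (F : Type) [Field F] [Fintype F], Q ≤ Fintype.card F →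
      ∀ z : K → F, ∃ v : J → F, ∀ e : J → K, (∃ k, z (e k) ≠ 0) → ∑ k, v k * z (e k) ≠ 0 := by
  classical
  refine ⟨Fintype.card (J → K) * Fintype.card J + 1, fun F _ _ hQ z => ?_⟩
  set idx := Fintype.equivFin J
  set p : (J → K) → F[X] := fun e => ∑ k, C (z (e k)) * X ^ (idx k : ℕ) with hp
  have hcoeff (e : J → K) (k : J) : (p e).coeff (idx k) = z (e k) := by
    simp only [hp, finsetSum_coeff, coeff_C_mul_X_pow]
    rw [Finset.sum_eq_single k]
    · simp
    · intro b _ hb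
      rw [if_neg]
      intro h
      exact hb (idx.injective (Fin.ext h)).symm
    · simp
  have hdeg (e : J → K) : (p e).natDegree ≤ Fintype.card J :=
    natDegree_sum_le_of_forall_le _ _ fun k _ =>
      (natDegree_C_mul_X_pow_le _ _).trans (idx k).2.le
  set P : F[X] := ∏ e, if p e = 0 then 1 else p e with hP
  have hP0 : P ≠ 0 := by
    rw [hP, Finset.prod_ne_zero_iff]
    intro e _
    split_ifs with h
    · exact one_ne_zero
    · exact h
  have hPdeg : P.natDegree ≤ Fintype.card (J → K) * Fintype.card J := by
    refine (natDegree_prod_le _ _).trans ?_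
    refine (Finset.sum_le_card_nsmul _ _ (Fintype.card J) fun e _ => ?_).trans (by simp)
    split_ifs
    · simp
    · exact hdeg e
  obtain ⟨t, ht⟩ : ∃ t, P.eval t ≠ 0 := by
    by_contra! h
    apply hP0
    apply Polynomial.eq_zero_of_natDegree_lt_card_of_eval_eq_zero P (f := fun x : F => x)
      (fun _ _ h => h) h
    omega
  refine ⟨fun k => t ^ (idx k : ℕ), fun e ⟨k, hk⟩ => ?_⟩
  have hpe : p e ≠ 0 := by
    intro h
    apply hk
    rw [← hcoeff, h, coeff_zero]
  rw [hP, eval_prod, Finset.prod_ne_zero_iff] at ht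
  have := ht e (Finset.mem_univ _)
  rw [if_neg hpe] at this
  simp only [hp, eval_finsetSum, eval_mul, eval_C, eval_pow, eval_X] at this
  simpa only [mul_comm] using this

lemma pow_injOn_of_coprime {F : Type} [Field F] [Fintype F] {n : ℕ}
    (hn : Nat.gcd n (Fintype.card F - 1) = 1) {x y : F} (hx : x ≠ 0) (hy : y ≠ 0)
    (h : x ^ n = y ^ n) : x = y := by
  classical
  have hc : (Nat.card Fˣ).Coprime n := by
    rw [Nat.card_eq_fintype_card, Fintype.card_units, Nat.Coprime, Nat.gcd_comm, hn]
  have := (powCoprime hc).injective (a₁ := Units.mk0 x hx) (a₂ := Units.mk0 y hy)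
    (Units.ext (by simpa using h))
  simpa using congrArg Units.val this

/-- If `u + a` lies in a single coset of the kernel of `y ↦ y ^ s` for all `d`-th roots of unity
`u`, then `x ^ n * (x ^ s + a)` is injective. -/
lemma injective_of_pow_add_const {F : Type} [Field F] [Fintype F] {d s n : ℕ}
    (hds : s * d = Fintype.card F - 1) (hn0 : 0 < n)
    (hn : Nat.gcd n (Fintype.card F - 1) = 1) {a κ : F}
    (hne : ∀ u : F, u ^ d = 1 → u + a ≠ 0) (hκ : ∀ u : F, u ^ d = 1 → (u + a) ^ s = κ) :
    Function.Injective (fun x : F => x ^ n * (x ^ s + a)) := by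
  have hroot (x : F) (hx : x ≠ 0) : (x ^ s) ^ d = 1 := by
    rw [← pow_mul, hds, FiniteField.pow_card_sub_one_eq_one x hx]
  have hz (x : F) (h : x ^ n * (x ^ s + a) = 0) : x = 0 := by
    by_contra hx
    exact mul_ne_zero (pow_ne_zero n hx) (hne _ (hroot x hx)) h
  intro x y h
  dsimp only at h
  by_cases hx : x = 0
  · subst hx
    rw [zero_pow hn0.ne', zero_mul] at h
    exact (hz y h.symm).symm
  by_cases hy : y = 0
  · subst hy
    rw [zero_pow hn0.ne', zero_mul] at h
    exact hz x h
  have hκ0 : κ ≠ 0 := by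
    rw [← hκ _ (hroot x hx)]
    exact pow_ne_zero _ (hne _ (hroot x hx))
  have h1 : (x ^ s) ^ n = (y ^ s) ^ n := by
    have := congrArg (· ^ s) h
    simp only [mul_pow, hκ _ (hroot x hx), hκ _ (hroot y hy)] at this
    have := mul_right_cancel₀ hκ0 this
    rwa [pow_right_comm, pow_right_comm y] at this
  have h2 := pow_injOn_of_coprime hn (pow_ne_zero s hx) (pow_ne_zero s hy) h1
  rw [h2] at h
  exact pow_injOn_of_coprime hn hx hy (mul_right_cancel₀ (hne _ (hroot y hy)) h)

/-- Carlitz–Wells: for every `d > 0` there is `Q(d)` such that for every finite field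
`F_q` with `q ≥ Q(d)` and `q ≡ 1 (mod d)`, and every `n > 0` with `gcd(n, q-1) = 1`,
there exists `a ≠ 0` in `F_q` such that `x^n (x^{(q-1)/d} + a)` permutes `F_q`. -/
theorem carlitz_wells (d : ℕ) (hd : 0 < d) :
    ∃ Q : ℕ, ∀ (F : Type) [Field F] [Fintype F],
      Q ≤ Fintype.card F → d ∣ Fintype.card F - 1 →
      ∀ n : ℕ, 0 < n → Nat.gcd n (Fintype.card F - 1) = 1 →
      ∃ a : F, a ≠ 0 ∧
        Function.Bijective (fun x : F => x ^ n * (x ^ ((Fintype.card F - 1) / d) + a)) := by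
  classical
  have : NeZero d := ⟨hd.ne'⟩
  obtain ⟨ι, _, hHJ⟩ := Combinatorics.Line.exists_mono_in_high_dimension (Fin d) (Fin d)
  obtain ⟨Q, hQ⟩ := exists_generic_vector (Option ι) (Option (Fin d))
  refine ⟨Q, fun F _ _ hF hdvd n hn0 hn => ?_⟩
  set s := (Fintype.card F - 1) / d
  have hds : s * d = Fintype.card F - 1 := Nat.div_mul_cancel hdvd
  have hq : 0 < Fintype.card F - 1 := by
    have := Fintype.one_lt_card (α := F)
    omega
  obtain ⟨ζ, hζ⟩ : ∃ ζ : F, IsPrimitiveRoot ζ d := by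
    obtain ⟨g, hg⟩ := IsCyclic.exists_ofOrder_eq_natCard (α := Fˣ)
    have hg' : IsPrimitiveRoot g (Fintype.card F - 1) := by
      rw [← Fintype.card_units, ← Nat.card_eq_fintype_card, ← hg]
      exact IsPrimitiveRoot.orderOf g
    exact ⟨_, (IsPrimitiveRoot.coe_units_iff.2 (hg'.pow hq hds.symm))⟩
  set z : Fin d → F := fun j => ζ ^ (j : ℕ) with hz
  have hz0 : z 0 = 1 := by simp [hz]
  have hzsurj (u : F) (hu : u ^ d = 1) : ∃ j, z j = u := by
    obtain ⟨i, hi, rfl⟩ := hζ.eq_pow_of_pow_eq_one hu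
    exact ⟨⟨i, hi⟩, rfl⟩
  -- `none` encodes the coefficient `0`.
  set zo : Option (Fin d) → F := fun o => o.elim 0 z with hzo
  obtain ⟨v, hv⟩ := hQ F hF zo
  -- The coordinate `none` of `v` is the constant term of the affine form `w`.
  set w : (ι → Fin d) → F := fun x => v none + ∑ i, v (some i) * z (x i) with hw
  have hw0 (x) : w x ≠ 0 := by
    have := hv (fun k => k.elim (some 0) fun i => some (x i)) ⟨none, by simp [hzo, hz0]⟩
    simpa [Fintype.sum_option, hzo, hz0] using this
  have hcol (x : ι → Fin d) : ∃ j, z j = w x ^ s := hzsurj _ <| by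
    rw [← pow_mul, hds, FiniteField.pow_card_sub_one_eq_one _ (hw0 x)]
  choose col hcol using hcol
  obtain ⟨l, c₀, hl⟩ := hHJ col
  set c : F := v none + ∑ i, v (some i) * zo (l.idxFun i) with hc
  set b : F := ∑ i, v (some i) * (if l.idxFun i = none then 1 else 0) with hb
  have hc0 : c ≠ 0 := by
    have := hv (fun k => k.elim (some 0) fun i => l.idxFun i) ⟨none, by simp [hzo, hz0]⟩
    simpa [Fintype.sum_option, hc, hzo, hz0] using this
  have hb0 : b ≠ 0 := by
    obtain ⟨i₀, hi₀⟩ := l.proper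
    have := hv (fun k => k.elim none fun i => if l.idxFun i = none then some 0 else none)
      ⟨some i₀, by simp [hzo, hz0, hi₀]⟩
    rw [Fintype.sum_option] at this
    convert this using 1
    rw [hb]
    simp only [Option.elim, hzo, mul_zero, zero_add]
    refine Finset.sum_congr rfl fun i _ => ?_
    split_ifs <;> simp_all
  have hline (j : Fin d) : w (l j) = c + b * z j := by
    rw [hw, hc, hb, add_assoc, Finset.sum_mul, ← Finset.sum_add_distrib]
    dsimp only
    congr 1
    refine Finset.sum_congr rfl fun i _ => ?_
    rw [Combinatorics.Line.apply_def]
    cases h : l.idxFun i <;> simp [hzo, h]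
  have hdiv (j : Fin d) : z j + c / b = w (l j) / b := by
    rw [hline]
    field_simp
    ring
  refine ⟨c / b, div_ne_zero hc0 hb0, Finite.injective_iff_bijective.1 <|
    injective_of_pow_add_const (κ := z c₀ / b ^ s) hds hn0 hn ?_ ?_⟩
  · intro u hu
    obtain ⟨j, rfl⟩ := hzsurj u hu
    rw [hdiv]
    exact div_ne_zero (hw0 _) hb0
  · intro u hu
    obtain ⟨j, rfl⟩ := hzsurj u hu
    rw [hdiv, div_pow, ← hcol, hl]
end
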